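/- arXiv:2501.10700 — 4 statements merged into one kernel-verified Lean document; each statement's English description precedes it below -/
import Mathlib

section
/- Let m, m' ≥ 2 and n = m·m'. A function c : (Fin n → ZMod 2) → ZMod 2 satisfies c ∈ C and wt(c) = 2^{n−2} if and only if there exist row vectors a₁, a₂ ∈ (Fin n → ZMod 2) and scalars b₁, b₂ ∈ ZMod 2 such that: (i) c(x) = (Σ_{i} a₁(i)·x(i) + b₁ + 1)·(Σ_{j} a₂(j)·x(j) + b₂ + 1) for all x; (ii) the 2×n matrix A with rows a₁, a₂ has rank 2 (equivalently, a₁ and a₂ are linearly independent); and (iii) for every i ∈ {1,…,m}, the block submatrix A_i has rank at most 1. -/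
/-- Monomial evaluation: `mon_S(α) = ∏_{i ∈ S} α i`. -/
def mon {n : ℕ} (S : Finset (Fin n)) : (Fin n → ZMod 2) → ZMod 2 :=
  fun x => ∏ i ∈ S, x i

/-- The Reed–Muller code `RM(r, n)` : span of the monomials of degree at most `r`. -/
def RMcode (r n : ℕ) : Submodule (ZMod 2) ((Fin n → ZMod 2) → ZMod 2) :=
  Submodule.span (ZMod 2) {c | ∃ S : Finset (Fin n), S.card ≤ r ∧ c = mon S}

/-- The second-order recursive subproduct code `C = RM(1,m')^{⊗[2,m]}` of length `2^{m·m'}`: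
span of the monomials `mon_S` with `|S| ≤ 2` and `|S ∩ Bᵢ| ≤ 1` for every block
`Bᵢ = {(i−1)·m', …, i·m'−1}` (an index `i : Fin (m·m')` lies in block `(i : ℕ) / m'`). -/
def Ccode (m m' : ℕ) : Submodule (ZMod 2) ((Fin (m * m') → ZMod 2) → ZMod 2) :=
  Submodule.span (ZMod 2) {c | ∃ S : Finset (Fin (m * m')),
    S.card ≤ 2 ∧ (∀ b : ℕ, (S.filter fun i : Fin (m * m') => (i : ℕ) / m' = b).card ≤ 1) ∧ c = mon S}

/-- Hamming weight: the number of evaluation points where `c` takes the value `1`. -/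
def wt {n : ℕ} (c : (Fin n → ZMod 2) → ZMod 2) : ℕ :=
  (Finset.univ.filter fun x => c x = 1).card

/-- The `2 × m'` submatrix `A_b` of a `2 × (m·m')` matrix `A`, formed by the columns
indexed by block `B_b` (the indices `i` with `(i : ℕ) / m' = b`). -/
def blockMat (m m' : ℕ) (A : Matrix (Fin 2) (Fin (m * m')) (ZMod 2)) (b : ℕ) :
    Matrix (Fin 2) {i : Fin (m * m') // (i : ℕ) / m' = b} (ZMod 2) :=
  A.submatrix id Subtype.val

open Finset

/-- The sign character. -/
def sgn6 (z : ZMod 2) : ℤ := if z = 0 then 1 else -1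

lemma sgn6_add (a b : ZMod 2) : sgn6 (a + b) = sgn6 a * sgn6 b := by
  revert a b; decide

lemma two6 : (2 : ZMod 2) = 0 := by decide

lemma add_self6 (a : ZMod 2) : a + a = 0 := by revert a; decide

lemma vadd_self6 {n : ℕ} (a : Fin n → ZMod 2) : a + a = 0 := by
  ext i; exact add_self6 _

lemma sum_sgn_zero {n : ℕ} (s : Finset (Fin n → ZMod 2)) (f : (Fin n → ZMod 2) → ZMod 2)
    (y : Fin n → ZMod 2) (hs : ∀ x ∈ s, x + y ∈ s) (hf : ∀ x ∈ s, f (x + y) = f x + 1) :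
    ∑ x ∈ s, sgn6 (f x) = 0 := by
  have h : ∑ x ∈ s, sgn6 (f x) = ∑ x ∈ s, - sgn6 (f x) := by
    refine Finset.sum_bij' (fun x _ => x + y) (fun x _ => x + y) hs hs ?_ ?_ ?_
    · intro x _; simp [add_assoc, vadd_self6]
    · intro x _; simp [add_assoc, vadd_self6]
    · intro x hx
      rw [hf x hx, sgn6_add]
      simp [sgn6]
  rw [Finset.sum_neg_distrib] at h
  linarith

/-- degree at most two -/
def Quad6 {n : ℕ} (c : (Fin n → ZMod 2) → ZMod 2) : Prop :=
  ∀ x y z, c (x + y + z) + c (x + y) + c (y + z) + c (x + z) + c x + c y + c z + c 0 = 0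

def bil6 {n : ℕ} (c : (Fin n → ZMod 2) → ZMod 2) (x y : Fin n → ZMod 2) : ZMod 2 :=
  c (x + y) + c x + c y + c 0

lemma bil6_add_right {n : ℕ} {c : (Fin n → ZMod 2) → ZMod 2} (h : Quad6 c) (x y z) :
    bil6 c x (y + z) = bil6 c x y + bil6 c x z := by
  have := h x y z
  unfold bil6
  rw [← add_assoc x y z]
  linear_combination this - (c (x+y) + c (x+z) + c x + c y + c z + c 0 + c (y+z) * 0) * two6

lemma bil6_comm {n : ℕ} (c : (Fin n → ZMod 2) → ZMod 2) (x y) :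
    bil6 c x y = bil6 c y x := by
  unfold bil6; rw [add_comm x y]; ring

lemma bil6_add_left {n : ℕ} {c : (Fin n → ZMod 2) → ZMod 2} (h : Quad6 c) (x y z) :
    bil6 c (x + y) z = bil6 c x z + bil6 c y z := by
  rw [bil6_comm, bil6_add_right h, bil6_comm c z, bil6_comm c z]

/-- radical -/
def rad6 {n : ℕ} (c : (Fin n → ZMod 2) → ZMod 2) (h : Quad6 c) :
    Submodule (ZMod 2) (Fin n → ZMod 2) where
  carrier := {a | ∀ x, bil6 c a x = 0}
  zero_mem' := by
    intro x
    have := bil6_add_left h 0 0 x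
    simpa using this
  add_mem' := by
    intro a b ha hb x
    rw [bil6_add_left h, ha x, hb x, add_zero]
  smul_mem' := by
    intro r a ha
    have hr : r = 0 ∨ r = 1 := by revert r; decide
    rcases hr with rfl | rfl
    · intro x
      have := bil6_add_left h 0 0 x
      simpa using this
    · simpa using ha

lemma sum_sgn_wt {n : ℕ} (c : (Fin n → ZMod 2) → ZMod 2) :
    ∑ x, sgn6 (c x) = 2 ^ n - 2 * (wt c : ℤ) := by
  have h1 : ∀ z : ZMod 2, sgn6 z = 1 - 2 * (if z = 1 then 1 else 0) := by decide
  simp_rw [h1]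
  rw [Finset.sum_sub_distrib, ← Finset.mul_sum]
  simp [wt]

lemma sq_sum {n : ℕ} (c : (Fin n → ZMod 2) → ZMod 2) (h : Quad6 c) [DecidablePred (· ∈ rad6 c h)] :
    (∑ x, sgn6 (c x)) ^ 2 = 2 ^ n * ∑ a ∈ univ.filter (· ∈ rad6 c h), sgn6 (c a + c 0) := by
  have e1 : (∑ x, sgn6 (c x)) ^ 2 = ∑ x, ∑ a, sgn6 (c a + c 0) * sgn6 (bil6 c a x) := by
    rw [sq, Finset.sum_mul_sum]
    refine Finset.sum_congr rfl fun x _ => ?_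
    rw [← Equiv.sum_comp (Equiv.addRight x)]
    refine Finset.sum_congr rfl fun a _ => ?_
    rw [← sgn6_add, ← sgn6_add]
    congr 1
    simp only [Equiv.coe_addRight, bil6]
    linear_combination - (c a + c 0) * two6
  rw [e1, Finset.sum_comm, Finset.mul_sum, Finset.sum_filter]
  refine Finset.sum_congr rfl fun a _ => ?_
  rw [← Finset.mul_sum]
  split_ifs with ha
  · have : ∀ x, bil6 c a x = 0 := ha
    simp [this, sgn6, mul_comm]
  · have : ∃ y, bil6 c a y ≠ 0 := by
      by_contra! hh
      exact ha hh
    obtain ⟨y, hy⟩ := this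
    rw [sum_sgn_zero univ (bil6 c a) y (by simp), mul_zero]
    intro x _
    rw [bil6_add_right h]
    congr 1
    revert hy; generalize bil6 c a y = z; revert z; decide

lemma rad_props {n : ℕ} (hn : 2 ≤ n) (c : (Fin n → ZMod 2) → ZMod 2) (h : Quad6 c)
    (hw : wt c = 2 ^ (n - 2)) :
    Nat.card (rad6 c h) = 2 ^ (n - 2) ∧ ∀ a ∈ rad6 c h, ∀ x, c (x + a) = c x := by
  classical
  obtain ⟨k, rfl⟩ : ∃ k, n = k + 2 := ⟨n - 2, by omega⟩
  have hk : k + 2 - 2 = k := by omega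
  rw [hk] at hw ⊢
  have hS := sum_sgn_wt c
  have hsq := sq_sum c h
  rw [hS, hw] at hsq
  have hpos : (0:ℤ) < 2 ^ k := by positivity
  have hg : ∀ a ∈ rad6 c h, ∀ b, c (b + a) + c 0 = (c b + c 0) + (c a + c 0) := by
    intro a ha b
    have := ha b
    rw [bil6, add_comm a b] at this
    linear_combination this - (c a + c b + c 0) * two6
  have h0 : ∀ a ∈ rad6 c h, c a + c 0 = 0 := by
    intro r hr
    by_contra hne
    rw [sum_sgn_zero _ (fun a => c a + c 0) r] at hsq
    · rw [pow_add] at hsq; push_cast at hsq; nlinarith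
    · intro x hx
      simp only [mem_filter, mem_univ, true_and] at hx ⊢
      exact add_mem hx hr
    · intro x hx
      rw [hg r hr]
      congr 1
      revert hne; generalize c r + c 0 = z; revert z; decide
  refine ⟨?_, ?_⟩
  · rw [Finset.sum_congr rfl (g := fun _ => (1:ℤ))] at hsq
    · have hc : Nat.card (rad6 c h) = (univ.filter (· ∈ rad6 c h)).card := by
        rw [Nat.card_eq_fintype_card, Fintype.card_subtype]
      rw [hc]
      rw [Finset.sum_const, pow_add] at hsq
      push_cast at hsq
      simp only [nsmul_eq_mul, mul_one] at hsq
      zify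
      have : (2:ℤ)^k * (4 * 2^k) = 2^k * (4 * ((univ.filter (· ∈ rad6 c h)).card : ℤ)) := by
        linear_combination hsq
      have := mul_left_cancel₀ hpos.ne' this
      linarith
    · intro x hx
      simp only [mem_filter, mem_univ, true_and] at hx
      rw [h0 x hx]; rfl
  · intro a ha x
    have := hg a ha x
    rw [h0 a ha, add_zero] at this
    exact add_right_cancel this

lemma mulVec_pair {n : ℕ} (a₁ a₂ x : Fin n → ZMod 2) (b₁ b₂ : ZMod 2) :
    (Matrix.of ![a₁, a₂]).mulVecLin x = ![b₁, b₂] ↔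
      (∑ i, a₁ i * x i) = b₁ ∧ (∑ i, a₂ i * x i) = b₂ := by
  rw [funext_iff, Fin.forall_fin_two]
  simp [Matrix.mulVec, dotProduct]

lemma prod_one (s t b₁ b₂ : ZMod 2) : (s + b₁ + 1) * (t + b₂ + 1) = 1 ↔ s = b₁ ∧ t = b₂ := by
  revert s t b₁ b₂; decide

lemma card_sub6 {n : ℕ} (R : Submodule (ZMod 2) (Fin n → ZMod 2)) :
    Nat.card R = 2 ^ Module.finrank (ZMod 2) R := by
  rw [Module.natCard_eq_pow_finrank (K := ZMod 2)]; simp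

/-- Minimum weight words of RM(2,n). -/
lemma min_wt {n : ℕ} (hn : 2 ≤ n) (c : (Fin n → ZMod 2) → ZMod 2) (h : Quad6 c)
    (hw : wt c = 2 ^ (n - 2)) : ∃ (a₁ a₂ : Fin n → ZMod 2) (b₁ b₂ : ZMod 2),
      (∀ x, c x = ((∑ i, a₁ i * x i) + b₁ + 1) * ((∑ j, a₂ j * x j) + b₂ + 1)) ∧
      (Matrix.of ![a₁, a₂]).rank = 2 := by
  classical
  obtain ⟨hcard, hinv⟩ := rad_props hn c h hw
  set R := rad6 c h
  have hfr : Module.finrank (ZMod 2) R = n - 2 := by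
    rw [card_sub6] at hcard
    exact Nat.pow_right_injective le_rfl hcard
  have hq : Module.finrank (ZMod 2) ((Fin n → ZMod 2) ⧸ R) = Module.finrank (ZMod 2) (Fin 2 → ZMod 2) := by
    have := Submodule.finrank_quotient_add_finrank R
    simp at this ⊢
    omega
  let e := LinearEquiv.ofFinrankEq _ _ hq
  let L : (Fin n → ZMod 2) →ₗ[ZMod 2] (Fin 2 → ZMod 2) := e.toLinearMap ∘ₗ R.mkQ
  have hLs : Function.Surjective L := e.surjective.comp R.mkQ_surjective
  have hLk : ∀ x, L x = 0 ↔ x ∈ R := by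
    intro x
    simp [L]
  let A := LinearMap.toMatrix' L
  have hA : Matrix.of ![A 0, A 1] = A := by
    ext i j; fin_cases i <;> rfl
  have hAL : A.mulVecLin = L := by
    rw [← Matrix.toLin'_apply']; exact Matrix.toLin'_toMatrix' L
  have hne : ∃ x0, c x0 = 1 := by
    by_contra! hh
    have : wt c = 0 := by simp [wt, hh]
    rw [this] at hw
    exact absurd hw (by positivity)
  obtain ⟨x0, hx0⟩ := hne
  have hsub : (univ.filter (· ∈ R)).image (fun a => x0 + a) ⊆ univ.filter (fun x => c x = 1) := by
    intro y hy
    simp only [mem_image, mem_filter, mem_univ, true_and] at hy ⊢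
    obtain ⟨a, ha, rfl⟩ := hy
    rw [hinv a ha, hx0]
  have heq := Finset.eq_of_subset_of_card_le hsub (by
    rw [Finset.card_image_of_injective _ (add_right_injective x0)]
    rw [Nat.card_eq_fintype_card, Fintype.card_subtype] at hcard
    rw [hcard]; exact hw.le)
  have hsupp : ∀ x, c x = 1 ↔ L x = L x0 := by
    intro x
    rw [← sub_eq_zero (a := L x), ← map_sub, hLk]
    have : x ∈ univ.filter (fun x => c x = 1) ↔ c x = 1 := by simp
    rw [← this, ← heq]
    simp only [mem_image, mem_filter, mem_univ, true_and]
    constructor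
    · rintro ⟨a, ha, rfl⟩; simpa using ha
    · intro hx; exact ⟨_, hx, by simp⟩
  refine ⟨A 0, A 1, L x0 0, L x0 1, ?_, ?_⟩
  · intro x
    have h01 : ∀ u v : ZMod 2, (u = 1 ↔ v = 1) → u = v := by decide
    apply h01
    rw [prod_one, ← mulVec_pair, hA, hAL, hsupp]
    have : ![L x0 0, L x0 1] = L x0 := by ext i; fin_cases i <;> rfl
    rw [this]
  · rw [hA, Matrix.rank, hAL, LinearMap.range_eq_top.2 hLs]
    simp

lemma wt_prod {n : ℕ} (c : (Fin n → ZMod 2) → ZMod 2) (a₁ a₂ : Fin n → ZMod 2) (b₁ b₂ : ZMod 2)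
    (hc : ∀ x, c x = ((∑ i, a₁ i * x i) + b₁ + 1) * ((∑ j, a₂ j * x j) + b₂ + 1))
    (hr : (Matrix.of ![a₁, a₂]).rank = 2) : wt c = 2 ^ (n - 2) := by
  classical
  set L := (Matrix.of ![a₁, a₂]).mulVecLin with hL
  have hr' : Module.finrank (ZMod 2) (LinearMap.range L) = 2 := hr
  have htop : LinearMap.range L = ⊤ := by
    apply Submodule.eq_top_of_finrank_eq
    rw [hr']; simp
  obtain ⟨x0, hx0⟩ := LinearMap.range_eq_top.1 htop ![b₁, b₂]
  have hk : Module.finrank (ZMod 2) (LinearMap.ker L) = n - 2 := by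
    have := LinearMap.finrank_range_add_finrank_ker L
    rw [hr'] at this
    simp at this
    omega
  rw [← hk, ← card_sub6, Nat.card_eq_fintype_card, Fintype.card_subtype, wt]
  refine Finset.card_bij' (fun x _ => x - x0) (fun x _ => x + x0) ?_ ?_ ?_ ?_
  · intro x hx
    simp only [mem_filter, mem_univ, true_and] at hx ⊢
    rw [hc, prod_one, ← mulVec_pair, ← hL] at hx
    rw [LinearMap.mem_ker, map_sub, hx, hx0, sub_self]
  · intro x hx
    simp only [mem_filter, mem_univ, true_and] at hx ⊢
    rw [hc, prod_one, ← mulVec_pair, ← hL, map_add, LinearMap.mem_ker.1 hx, hx0, zero_add]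
  · intro x _; simp
  · intro x _; simp

lemma rank_le_one_of {ι : Type*} [Fintype ι] (A : Matrix (Fin 2) ι (ZMod 2))
    (h : ∀ i j, A 0 i * A 1 j = A 0 j * A 1 i) : A.rank ≤ 1 := by
  by_cases h0 : ∃ i, A 0 i ≠ 0
  · obtain ⟨i, hi⟩ := h0
    have hi1 : A 0 i = 1 := by
      revert hi; generalize A 0 i = z; revert z; decide
    have : A = Matrix.vecMulVec ![1, A 1 i] (A 0) := by
      ext k j
      fin_cases k
      · simp [Matrix.vecMulVec]
      · have := h i j
        rw [hi1, one_mul] at this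
        simp [Matrix.vecMulVec, this, mul_comm]
    rw [this]
    exact Matrix.rank_vecMulVec_le _ _
  · push Not at h0
    have : A = Matrix.vecMulVec ![0, 1] (A 1) := by
      ext k j
      fin_cases k
      · simp [Matrix.vecMulVec, h0]
      · simp [Matrix.vecMulVec]
    rw [this]
    exact Matrix.rank_vecMulVec_le _ _

lemma minor_of_rank {ι : Type*} [Fintype ι] (A : Matrix (Fin 2) ι (ZMod 2))
    (h : A.rank ≤ 1) (i j : ι) : A 0 i * A 1 j = A 0 j * A 1 i := by
  by_contra hne
  have hdet : (A.submatrix id ![i, j]).det ≠ 0 := by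
    rw [Matrix.det_fin_two]
    simp only [Matrix.submatrix_apply, id, Matrix.cons_val_zero, Matrix.cons_val_one]
    exact sub_ne_zero.2 hne
  have h2 : (A.submatrix id ![i, j]).rank = 2 := by
    rw [Matrix.rank_of_isUnit _ ((Matrix.isUnit_iff_isUnit_det _).2 (isUnit_iff_ne_zero.2 hdet))]
    simp
  have h3 : (A.submatrix id ![i, j]).rank ≤ A.rank := by
    exact Matrix.rank_submatrix_le _ _ _
  omega

lemma code_props {m m' : ℕ} {c : (Fin (m * m') → ZMod 2) → ZMod 2} (hc : c ∈ Ccode m m') :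
    Quad6 c ∧ ∀ i j : Fin (m * m'), i ≠ j → (i : ℕ) / m' = (j : ℕ) / m' →
      bil6 c (Pi.single i 1) (Pi.single j 1) = 0 := by
  induction hc using Submodule.span_induction with
  | mem c hc =>
    obtain ⟨S, hS, hb, rfl⟩ := hc
    have hcases : S = ∅ ∨ (∃ a, S = {a}) ∨ ∃ a b, a ≠ b ∧ S = {a, b} := by
      have : S.card = 0 ∨ S.card = 1 ∨ S.card = 2 := by omega
      rcases this with h | h | h
      · left; exact Finset.card_eq_zero.1 h
      · right; left; exact Finset.card_eq_one.1 h
      · right; right; exact Finset.card_eq_two.1 h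
    rcases hcases with rfl | ⟨a, rfl⟩ | ⟨a, b, hab, rfl⟩
    · refine ⟨fun x y z => ?_, fun i j _ _ => ?_⟩
      · simp only [mon, prod_empty]; decide
      · simp only [mon, bil6, prod_empty]; decide
    · refine ⟨fun x y z => ?_, fun i j _ _ => ?_⟩
      · simp only [mon, prod_singleton, Pi.add_apply, Pi.zero_apply]
        generalize x a = x, y a = y, z a = z
        revert x y z; decide
      · simp only [mon, bil6, prod_singleton, Pi.add_apply, Pi.zero_apply]
        generalize (Pi.single i 1 : Fin (m * m') → ZMod 2) a = x,
          (Pi.single j 1 : Fin (m * m') → ZMod 2) a = y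
        revert x y; decide
    · have hbl : (a : ℕ) / m' ≠ (b : ℕ) / m' := by
        intro hh
        have := hb ((b : ℕ) / m')
        rw [Finset.filter_true_of_mem] at this
        · rw [Finset.card_pair hab] at this; omega
        · intro x hx
          simp only [mem_insert, mem_singleton] at hx
          rcases hx with rfl | rfl
          · exact hh
          · rfl
      refine ⟨fun x y z => ?_, fun i j hij hbij => ?_⟩
      · simp only [mon, prod_pair hab, Pi.add_apply, Pi.zero_apply]
        generalize x a = x, y a = y, z a = z, x b = x', y b = y', z b = z'
        revert x y z x' y' z'; decide
      · simp only [mon, bil6, prod_pair hab, Pi.add_apply, Pi.zero_apply, Pi.single_apply]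
        have h1 : ¬ (a = i ∧ b = j) := by rintro ⟨rfl, rfl⟩; exact hbl hbij
        have h2 : ¬ (a = j ∧ b = i) := by rintro ⟨rfl, rfl⟩; exact hbl hbij.symm
        have key : ∀ (p q r s : Prop) [Decidable p] [Decidable q] [Decidable r] [Decidable s],
            ¬ (p ∧ s) → ¬ (q ∧ r) →
            ((if p then (1 : ZMod 2) else 0) + (if q then 1 else 0)) *
              ((if r then 1 else 0) + (if s then 1 else 0)) +
            (if p then 1 else 0) * (if r then 1 else 0) +
            (if q then 1 else 0) * (if s then 1 else 0) + 0 * 0 = 0 := by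
          intro p q r s _ _ _ _ h1 h2
          by_cases p <;> by_cases q <;> by_cases r <;> by_cases s <;> simp_all <;> decide
        exact key _ _ _ _ h1 h2
  | zero =>
    refine ⟨fun x y z => ?_, fun i j _ _ => ?_⟩ <;> simp [bil6]
  | add c d _ _ hc hd =>
    refine ⟨fun x y z => ?_, fun i j hi hj => ?_⟩
    · simp only [Pi.add_apply]
      linear_combination hc.1 x y z + hd.1 x y z
    · have h1 := hc.2 i j hi hj
      have h2 := hd.2 i j hi hj
      unfold bil6 at h1 h2 ⊢
      simp only [Pi.add_apply]
      linear_combination h1 + h2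
  | smul r c _ hc =>
    refine ⟨fun x y z => ?_, fun i j hi hj => ?_⟩
    · simp only [Pi.smul_apply, smul_eq_mul]
      linear_combination r * hc.1 x y z
    · have h1 := hc.2 i j hi hj
      unfold bil6 at h1 ⊢
      simp only [Pi.smul_apply, smul_eq_mul]
      linear_combination r * h1

lemma mon_mem {m m' : ℕ} (i j : Fin (m * m')) (h : i = j ∨ (i : ℕ) / m' ≠ (j : ℕ) / m') :
    (fun x => x i * x j) ∈ Ccode m m' := by
  apply Submodule.subset_span
  refine ⟨{i, j}, Finset.card_le_two, ?_, ?_⟩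
  · intro b
    rw [Finset.card_le_one]
    intro x hx y hy
    simp only [mem_filter, mem_insert, mem_singleton] at hx hy
    obtain ⟨hx1, hx2⟩ := hx
    obtain ⟨hy1, hy2⟩ := hy
    rcases h with rfl | h
    · grind
    · rcases hx1 with rfl | rfl <;> rcases hy1 with rfl | rfl
      · rfl
      · exact absurd (hx2.trans hy2.symm) h
      · exact absurd (hy2.trans hx2.symm) h
      · rfl
  · ext x
    by_cases hij : i = j
    · subst hij
      simp only [mon, insert_eq_of_mem, mem_singleton, prod_singleton]
      generalize x i = z; revert z; decide
    · simp only [mon, prod_pair hij]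

lemma one_mem6 {m m' : ℕ} : (fun _ => 1) ∈ Ccode m m' := by
  apply Submodule.subset_span
  exact ⟨∅, by simp, by simp, by ext x; simp [mon]⟩

lemma lin_mem {m m' : ℕ} (a : Fin (m * m') → ZMod 2) :
    (fun x => ∑ i, a i * x i) ∈ Ccode m m' := by
  have : (fun x : Fin (m * m') → ZMod 2 => ∑ i, a i * x i)
      = ∑ i, a i • (fun x : Fin (m * m') → ZMod 2 => x i * x i) := by
    ext x
    simp only [Finset.sum_apply, Pi.smul_apply, smul_eq_mul]
    refine Finset.sum_congr rfl fun i _ => ?_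
    congr 1
    generalize x i = z; revert z; decide
  rw [this]
  exact Submodule.sum_mem _ fun i _ => Submodule.smul_mem _ _ (mon_mem i i (Or.inl rfl))

lemma quad_mem {m m' : ℕ} (a₁ a₂ : Fin (m * m') → ZMod 2)
    (h : ∀ i j : Fin (m * m'), (i : ℕ) / m' = (j : ℕ) / m' → a₁ i * a₂ j = a₁ j * a₂ i) :
    (fun x => (∑ i, a₁ i * x i) * (∑ j, a₂ j * x j)) ∈ Ccode m m' := by
  classical
  let good : Fin (m * m') × Fin (m * m') → Prop := fun p => p.1 = p.2 ∨ (p.1 : ℕ) / m' ≠ (p.2 : ℕ) / m'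
  have : (fun x : Fin (m * m') → ZMod 2 => (∑ i, a₁ i * x i) * (∑ j, a₂ j * x j))
      = ∑ p ∈ univ.filter good, (a₁ p.1 * a₂ p.2) • (fun x : Fin (m * m') → ZMod 2 => x p.1 * x p.2) := by
    ext x
    simp only [Finset.sum_apply, Pi.smul_apply, smul_eq_mul]
    rw [Finset.sum_mul_sum, ← Finset.sum_product', Finset.univ_product_univ,
      ← Finset.sum_filter_add_sum_filter_not univ good]
    have hz : ∑ p ∈ univ.filter (fun p => ¬ good p), a₁ p.1 * x p.1 * (a₂ p.2 * x p.2) = 0 := by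
      refine Finset.sum_involution (fun p _ => p.swap) ?_ ?_ ?_ ?_
      · rintro ⟨i, j⟩ hp
        simp only [good, mem_filter, mem_univ, true_and, not_or, not_not] at hp
        have := h i j hp.2
        simp only [Prod.swap]
        linear_combination (x i * x j) * this + a₁ j * a₂ i * x i * x j * two6
      · rintro ⟨i, j⟩ hp _ heq
        simp only [good, mem_filter, mem_univ, true_and, not_or, not_not] at hp
        simp only [Prod.swap, Prod.mk.injEq] at heq
        exact hp.1 heq.2
      · rintro ⟨i, j⟩ hp
        simp only [good, mem_filter, mem_univ, true_and, not_or, not_not, Prod.swap] at hp ⊢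
        exact ⟨fun h => hp.1 h.symm, hp.2.symm⟩
      · rintro ⟨i, j⟩ _; rfl
    rw [hz, add_zero]
    exact Finset.sum_congr rfl fun p _ => by ring
  rw [this]
  refine Submodule.sum_mem _ fun p hp => Submodule.smul_mem _ _ (mon_mem _ _ ?_)
  simpa [good] using hp

lemma prod_mem6 {m m' : ℕ} (a₁ a₂ : Fin (m * m') → ZMod 2) (b₁ b₂ : ZMod 2)
    (h : ∀ i j : Fin (m * m'), (i : ℕ) / m' = (j : ℕ) / m' → a₁ i * a₂ j = a₁ j * a₂ i) :
    (fun x => ((∑ i, a₁ i * x i) + b₁ + 1) * ((∑ j, a₂ j * x j) + b₂ + 1)) ∈ Ccode m m' := by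
  have := add_mem (add_mem (quad_mem a₁ a₂ h) (Submodule.smul_mem _ (b₂ + 1) (lin_mem (m' := m') a₁)))
    (add_mem (Submodule.smul_mem _ (b₁ + 1) (lin_mem (m' := m') a₂))
      (Submodule.smul_mem _ ((b₁ + 1) * (b₂ + 1)) one_mem6))
  convert this using 1
  ext x
  simp only [Pi.add_apply, Pi.smul_apply, smul_eq_mul]
  ring

/-- characterization of the minimum weight codewords of `C`. -/
theorem stmt_6 (m m' : ℕ) (hm : 2 ≤ m) (hm' : 2 ≤ m')
    (c : (Fin (m * m') → ZMod 2) → ZMod 2) :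
    (c ∈ Ccode m m' ∧ wt c = 2 ^ (m * m' - 2)) ↔
    ∃ (a₁ a₂ : Fin (m * m') → ZMod 2) (b₁ b₂ : ZMod 2),
      (∀ x, c x = ((∑ i, a₁ i * x i) + b₁ + 1) * ((∑ j, a₂ j * x j) + b₂ + 1)) ∧
      (Matrix.of ![a₁, a₂]).rank = 2 ∧
      (∀ b : ℕ, b < m → (blockMat m m' (Matrix.of ![a₁, a₂]) b).rank ≤ 1) := by
  constructor
  · rintro ⟨hc, hw⟩
    obtain ⟨hq, hb⟩ := code_props hc
    have hn : 2 ≤ m * m' := by nlinarith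
    obtain ⟨a₁, a₂, b₁, b₂, hf, hr⟩ := min_wt hn c hq hw
    refine ⟨a₁, a₂, b₁, b₂, hf, hr, ?_⟩
    intro b _
    apply rank_le_one_of
    rintro ⟨i, hi⟩ ⟨j, hj⟩
    simp only [blockMat, Matrix.submatrix_apply, id, Matrix.of_apply, Matrix.cons_val_zero,
      Matrix.cons_val_one]
    by_cases hij : i = j
    · subst hij; rfl
    have := hb i j hij (hi.trans hj.symm)
    simp only [bil6, hf, Pi.add_apply, Pi.zero_apply, mul_add, Finset.sum_add_distrib,
      Pi.single_apply, mul_ite, mul_one, mul_zero, Finset.sum_ite_eq', Finset.mem_univ, if_true,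
      Finset.sum_const_zero] at this
    revert this
    generalize a₁ i = p, a₁ j = q, a₂ i = r, a₂ j = s
    clear hf
    revert p q r s b₁ b₂
    clear * -
    decide
  · rintro ⟨a₁, a₂, b₁, b₂, hf, hr, hb⟩
    refine ⟨?_, wt_prod c a₁ a₂ b₁ b₂ hf hr⟩
    rw [show c = _ from funext hf]
    apply prod_mem6
    intro i j hij
    have hlt : (j : ℕ) / m' < m := by
      rw [Nat.div_lt_iff_lt_mul (by omega)]
      exact j.2
    exact minor_of_rank _ (hb _ hlt) ⟨i, hij⟩ ⟨j, rfl⟩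
end

section
/- Let m, m' ≥ 2 and n = m·m'. Then 3 · |{ c ∈ C : wt(c) = 2^{n−2} }| = 2 · |{ A : A is a 2×n matrix over ZMod 2 with rank(A) = 2 and rank(A_i) ≤ 1 for every i ∈ {1,…,m} }|. -/
namespace RSC

lemma two0 : (2 : ZMod 2) = 0 := by decide

/-- `Dg r f`: all `(r+1)`-fold derivatives vanish. -/
def Dg {n : ℕ} : ℕ → ((Fin n → ZMod 2) → ZMod 2) → Prop
  | 0, f => ∀ a x, f (x + a) = f x
  | r + 1, f => ∀ a, Dg r (fun x => f (x + a) + f x)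

lemma Dg_zero {n : ℕ} (r : ℕ) : Dg r (fun _ : Fin n → ZMod 2 => (0 : ZMod 2)) := by
  induction r with
  | zero => intro a x; rfl
  | succ r ih => intro a; simpa using ih

lemma Dg_add {n : ℕ} (r : ℕ) : ∀ f g : (Fin n → ZMod 2) → ZMod 2, Dg r f → Dg r g →
    Dg r (fun x => f x + g x) := by
  induction r with
  | zero => intro f g hf hg a x; simp only [hf a x, hg a x]
  | succ r ih =>
    intro f g hf hg a
    have := ih _ _ (hf a) (hg a)
    convert this using 2
    ring

lemma Dg_mono {n : ℕ} (r : ℕ) : ∀ f : (Fin n → ZMod 2) → ZMod 2, Dg r f → Dg (r + 1) f := by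
  induction r with
  | zero =>
    intro f hf a b x
    have h1 := hf a (x + b)
    have h2 := hf b x
    have h3 := hf a x
    simp only [h1, h2, h3]
  | succ r ih =>
    intro f hf a
    exact ih _ (hf a)

lemma Dg_smul {n : ℕ} (r : ℕ) (c : ZMod 2) (f : (Fin n → ZMod 2) → ZMod 2) (hf : Dg r f) :
    Dg r (fun x => f x * c) := by
  have : c = 0 ∨ c = 1 := by revert c; decide
  rcases this with rfl | rfl
  · simpa using Dg_zero r
  · simpa using hf

/-- affine function -/
def aff {n : ℕ} (p : (Fin n → ZMod 2) × ZMod 2) (x : Fin n → ZMod 2) : ZMod 2 := p.1 ⬝ᵥ x + p.2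

lemma Dg_mul_aff {n : ℕ} (p : (Fin n → ZMod 2) × ZMod 2) (r : ℕ) :
    ∀ f : (Fin n → ZMod 2) → ZMod 2, Dg r f → Dg (r + 1) (fun x => f x * aff p x) := by
  induction r with
  | zero =>
    intro f hf a b x
    have h1 := hf a (x + b)
    have h2 := hf b x
    have h3 := hf a x
    simp only [h1, h2, h3, aff, dotProduct_add]
    linear_combination (f x * p.1 ⬝ᵥ b) * two0
  | succ r ih =>
    intro f hf a
    have h1 := ih _ (hf a)
    have h2 := Dg_add _ _ _ (Dg_mono _ _ (hf a)) hf
    have h2' : Dg (r + 1) (fun x => f (x + a)) := by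
      convert h2 using 2 with x
      linear_combination (- f x) * two0
    have h3 := Dg_add _ _ _ h1 (Dg_smul _ (p.1 ⬝ᵥ a) _ h2')
    convert h3 using 2 with x
    simp only [aff, dotProduct_add]
    linear_combination (0) * two0

lemma Dg_weight {n : ℕ} (r : ℕ) : ∀ f : (Fin n → ZMod 2) → ZMod 2, Dg r f →
    wt f = 0 ∨ 2 ^ n ≤ 2 ^ r * wt f := by
  have const : ∀ f : (Fin n → ZMod 2) → ZMod 2, (∀ a x, f (x + a) = f x) → 
      wt f = 0 ∨ wt f = 2 ^ n := by
    intro f hf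
    have h : ∀ x, f x = f 0 := fun x => by simpa using hf x 0
    have : f 0 = 0 ∨ f 0 = 1 := by generalize f 0 = c; revert c; decide
    unfold wt
    rcases this with h0 | h0
    · left; simp [h, h0]
    · right; simp [h, h0]
  induction r with
  | zero =>
    intro f hf
    rcases const f hf with h | h
    · exact Or.inl h
    · right; simp [h]
  | succ r ih =>
    intro f hf
    by_cases hc : ∀ a, wt (fun x => f (x + a) + f x) = 0
    · rcases const f (fun a x => by
        have := hc a
        simp only [wt, Finset.card_eq_zero, Finset.filter_eq_empty_iff, Finset.mem_univ,
          true_implies] at this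
        have h := @this x
        revert h
        generalize f (x + a) = s
        generalize f x = t
        revert s t; decide) with h | h
      · exact Or.inl h
      · right; rw [h]; exact Nat.le_mul_of_pos_left _ (by positivity)
    · push Not at hc
      obtain ⟨a, ha⟩ := hc
      right
      have h1 := (ih _ (hf a)).resolve_left ha
      have h2 : wt (fun x => f (x + a) + f x) ≤ 2 * wt f := by
        have e : wt (fun x => f (x + a)) = wt f := by
          unfold wt
          refine Finset.card_bij (fun x _ => x + a) ?_ ?_ ?_
          · intro x hx; simpa using hx
          · intro x _ y _ h; simpa using h
          · intro y hy; exact ⟨y - a, by simpa using hy, by simp⟩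
        have : wt (fun x => f (x + a) + f x) ≤ wt (fun x => f (x + a)) + wt f := by
          unfold wt
          refine le_trans (Finset.card_le_card ?_) (Finset.card_union_le _ _)
          intro x
          simp only [Finset.mem_filter, Finset.mem_univ, true_and, Finset.mem_union]
          generalize f (x + a) = s
          generalize f x = t
          revert s t; decide
        omega
      calc 2 ^ n ≤ 2 ^ r * _ := h1
        _ ≤ 2 ^ r * (2 * wt f) := Nat.mul_le_mul_left _ h2
        _ = _ := by ring

/-- sign -/
def sg (z : ZMod 2) : ℤ := if z = 0 then 1 else -1

lemma sg_add (z w : ZMod 2) : sg (z + w) = sg z * sg w := by revert z w; decide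

lemma sum_sg {n : ℕ} (u : Fin n → ZMod 2) :
    ∑ x : Fin n → ZMod 2, sg (u ⬝ᵥ x) = if u = 0 then 2 ^ n else 0 := by
  split_ifs with h
  · subst h; simp [sg]
  · obtain ⟨i, hi⟩ := Function.ne_iff.mp h
    have hi1 : u i = 1 := by
      revert hi; simp only [Pi.zero_apply]; generalize u i = s; revert s; decide
    have := (Equiv.sum_comp (Equiv.addRight (Pi.single i (1 : ZMod 2)))
      (fun x : Fin n → ZMod 2 => sg (u ⬝ᵥ x)))
    simp only [Equiv.coe_addRight, dotProduct_add, dotProduct_single, hi1, sg_add, mul_one] at this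
    rw [← Finset.sum_mul] at this
    have e : sg 1 = -1 := by decide
    rw [e] at this
    linarith

lemma wt_prod {n : ℕ} (p q : (Fin n → ZMod 2) × ZMod 2) (hp : p.1 ≠ 0) (hq : q.1 ≠ 0)
    (hpq : p.1 ≠ q.1) : 4 * wt (fun x => aff p x * aff q x) = 2 ^ n := by
  have key : ∀ x, 4 * (if aff p x * aff q x = 1 then (1:ℤ) else 0) =
      1 - sg p.2 * sg (p.1 ⬝ᵥ x) - sg q.2 * sg (q.1 ⬝ᵥ x)
        + sg p.2 * sg q.2 * sg ((p.1 + q.1) ⬝ᵥ x) := by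
    intro x
    have gen : ∀ s t : ZMod 2, 4 * (if s * t = 1 then (1:ℤ) else 0) =
      1 - sg s - sg t + sg s * sg t := by decide
    rw [gen]
    simp only [aff, add_dotProduct, sg_add]
    ring
  have hs : p.1 + q.1 ≠ 0 := by
    intro h
    apply hpq
    funext i
    have := congrFun h i
    simp only [Pi.add_apply, Pi.zero_apply] at this
    linear_combination this - q.1 i * two0
  have h : (4 * wt (fun x => aff p x * aff q x) : ℤ) = 2 ^ n := by
    unfold wt
    rw [Finset.card_filter]
    push_cast
    rw [Finset.mul_sum, Finset.sum_congr rfl (fun x _ => key x)]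
    simp only [Finset.sum_add_distrib, Finset.sum_sub_distrib, ← Finset.mul_sum, sum_sg, hs, hp, hq]
    simp
  exact_mod_cast h

/-- non-constant affine functions equal to one on the support of `c` -/
def Ec {n : ℕ} (c : (Fin n → ZMod 2) → ZMod 2) : Finset ((Fin n → ZMod 2) × ZMod 2) :=
  Finset.univ.filter fun p => p.1 ≠ 0 ∧ ∀ x, c x = 1 → aff p x = 1

lemma mem_Ec {n : ℕ} (c : (Fin n → ZMod 2) → ZMod 2) (p : (Fin n → ZMod 2) × ZMod 2) :
    p ∈ Ec c ↔ p.1 ≠ 0 ∧ ∀ x, c x = 1 → aff p x = 1 := by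
  simp [Ec]

lemma Ec_card {n : ℕ} (c : (Fin n → ZMod 2) → ZMod 2) (hc : Dg 2 c) (hw : 4 * wt c = 2 ^ n) :
    (Ec c).card = 3 := by
  classical
  have hw0 : 0 < wt c := by
    have : 0 < 2 ^ n := by positivity
    omega
  obtain ⟨x0, hx0⟩ := Finset.card_pos.mp hw0
  simp only [Finset.mem_filter, Finset.mem_univ, true_and] at hx0
  set S : Finset (Fin n → ZMod 2) := Finset.univ.filter fun x => c x = 1 with hS
  have hSw : S.card = wt c := rfl
  set F : (Fin n → ZMod 2) → ℤ := fun u => ∑ x ∈ S, sg (u ⬝ᵥ x) with hF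
  set U : Finset (Fin n → ZMod 2) := Finset.univ.filter fun u => ∃ a, ∀ x ∈ S, u ⬝ᵥ x + a = 1 with hU
  have hF2 : ∀ u, F u ^ 2 = if u ∈ U then (wt c : ℤ) ^ 2 else 0 := by
    intro u
    have k : ∀ a, wt (fun x => c x * aff (u, a) x) = (S.filter fun x => u ⬝ᵥ x + a = 1).card := by
      intro a
      unfold wt
      rw [hS, Finset.filter_filter]
      congr 1
      ext x
      simp only [Finset.mem_filter, Finset.mem_univ, true_and]
      simp only [aff]
      generalize c x = s
      generalize u ⬝ᵥ x + a = t
      revert s t; decide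
    have d0 := Dg_weight 3 _ (Dg_mul_aff (u, 0) 2 c hc)
    have d1 := Dg_weight 3 _ (Dg_mul_aff (u, 1) 2 c hc)
    rw [k] at d0 d1
    have hsum : (S.filter fun x => u ⬝ᵥ x + 0 = 1).card + (S.filter fun x => u ⬝ᵥ x + 1 = 1).card
        = wt c := by
      rw [← hSw, ← Finset.card_filter_add_card_filter_not (s := S) (fun x => u ⬝ᵥ x + 0 = 1)]
      congr 2
      ext x
      simp only [Finset.mem_filter, and_congr_right_iff]
      intro _
      generalize u ⬝ᵥ x = t
      revert t; decide
    have hFv : F u = (S.filter fun x => u ⬝ᵥ x + 1 = 1).card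
        - (S.filter fun x => u ⬝ᵥ x + 0 = 1).card := by
      rw [Finset.card_filter, Finset.card_filter]
      push_cast
      rw [← Finset.sum_sub_distrib, hF]
      refine Finset.sum_congr rfl fun x _ => ?_
      generalize u ⬝ᵥ x = t
      revert t; decide
    have z : ∀ a, (S.filter fun x => u ⬝ᵥ x + (a + 1) = 1).card = 0 ↔ ∀ x ∈ S, u ⬝ᵥ x + a = 1 := by
      intro a
      rw [Finset.card_eq_zero, Finset.filter_eq_empty_iff]
      refine forall₂_congr fun x _ => ?_
      generalize u ⬝ᵥ x = t
      revert a t; decide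
    have z0 := z 0
    have z1 := z 1
    have e1 : (0 : ZMod 2) + 1 = 1 := by decide
    have e2 : (1 : ZMod 2) + 1 = 0 := by decide
    rw [e1] at z0
    rw [e2] at z1
    by_cases hu : u ∈ U
    · rw [if_pos hu]
      obtain ⟨a, ha⟩ := (Finset.mem_filter.mp hu).2
      have : a = 0 ∨ a = 1 := (by decide : ∀ a : ZMod 2, a = 0 ∨ a = 1) a
      rcases this with rfl | rfl
      · have := z0.mpr ha
        rw [hFv, this, ← hsum, this]; push_cast; ring
      · have := z1.mpr ha
        rw [hFv, this, ← hsum, this]; push_cast; ring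
    · rw [if_neg hu]
      have n0 : (S.filter fun x => u ⬝ᵥ x + 1 = 1).card ≠ 0 := fun h =>
        hu (Finset.mem_filter.mpr ⟨Finset.mem_univ _, 0, z0.mp h⟩)
      have n1 : (S.filter fun x => u ⬝ᵥ x + 0 = 1).card ≠ 0 := fun h =>
        hu (Finset.mem_filter.mpr ⟨Finset.mem_univ _, 1, z1.mp h⟩)
      have d0 := d0.resolve_left n1
      have d1 := d1.resolve_left n0
      have : F u = 0 := by rw [hFv]; omega
      rw [this]; rfl
  have hP : ∑ u, F u ^ 2 = 2 ^ n * wt c := by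
    have : ∀ u, F u ^ 2 = ∑ x ∈ S, ∑ y ∈ S, sg ((x + y) ⬝ᵥ u) := by
      intro u
      rw [sq, hF, Finset.sum_mul_sum]
      refine Finset.sum_congr rfl fun x _ => Finset.sum_congr rfl fun y _ => ?_
      rw [add_dotProduct, sg_add, dotProduct_comm x, dotProduct_comm y]
    rw [Finset.sum_congr rfl fun u _ => this u, Finset.sum_comm]
    have h2 : ∀ x ∈ S, ∑ u, ∑ y ∈ S, sg ((x + y) ⬝ᵥ u) = 2 ^ n := by
      intro x hx
      rw [Finset.sum_comm]
      simp only [sum_sg]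
      have : ∀ y, x + y = 0 ↔ y = x := by
        intro y
        constructor
        · intro h
          funext i
          have := congrFun h i
          simp only [Pi.add_apply, Pi.zero_apply] at this
          linear_combination this - x i * two0
        · rintro rfl
          funext i
          simp only [Pi.add_apply, Pi.zero_apply]
          linear_combination y i * two0
      simp only [this, Finset.sum_ite_eq', hx, if_true]
    rw [Finset.sum_congr rfl h2, Finset.sum_const, hSw]
    simp [mul_comm]
  have hUc : U.card = 4 := by
    rw [Finset.sum_congr rfl fun u _ => hF2 u, Finset.sum_ite_mem] at hP
    simp only [Finset.univ_inter, Finset.sum_const, nsmul_eq_mul] at hP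
    have e : (2 : ℤ) ^ n = 4 * wt c := by exact_mod_cast hw.symm
    rw [e] at hP
    have : (wt c : ℤ) ^ 2 ≠ 0 := by positivity
    have := mul_right_cancel₀ this (hP.trans (by ring : _ = (4 : ℤ) * (wt c : ℤ) ^ 2))
    exact_mod_cast this
  have h0U : (0 : Fin n → ZMod 2) ∈ U := by
    simp only [hU, Finset.mem_filter, Finset.mem_univ, true_and]
    exact ⟨1, by simp⟩
  have : (Ec c).card = (U.erase 0).card := by
    refine Finset.card_bij (fun p _ => p.1) ?_ ?_ ?_
    · intro p hp
      simp only [mem_Ec, aff] at hp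
      simp only [hU, hS, Finset.mem_erase, Finset.mem_filter, Finset.mem_univ, true_and]
      exact ⟨hp.1, p.2, hp.2⟩
    · intro p hp q hq h
      simp only [mem_Ec, aff] at hp hq
      have h1 := hp.2 x0 hx0
      have h2 := hq.2 x0 hx0
      refine Prod.ext h ?_
      rw [h] at h1
      exact add_left_cancel (h1.trans h2.symm)
    · intro u hu
      simp only [hU, hS, Finset.mem_erase, Finset.mem_filter, Finset.mem_univ, true_and] at hu
      obtain ⟨h0, a, ha⟩ := hu
      exact ⟨(u, a), by simp only [mem_Ec, aff]; exact ⟨h0, ha⟩, rfl⟩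
  rw [this, Finset.card_erase_of_mem h0U, hUc]

lemma aff_mem_Dg {n : ℕ} (S : Finset (Fin n)) : Dg S.card (mon S) := by
  classical
  induction S using Finset.induction_on with
  | empty => intro a x; simp [mon]
  | insert i S hi ih =>
    rw [Finset.card_insert_of_notMem hi]
    have := Dg_mul_aff (Pi.single i 1, 0) _ _ ih
    convert this using 1
    funext x
    simp [mon, Finset.prod_insert hi, aff, mul_comm]

lemma Ccode_Dg {m m' : ℕ} {c : (Fin (m * m') → ZMod 2) → ZMod 2} (hc : c ∈ Ccode m m') :
    Dg 2 c := by
  unfold Ccode at hc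
  induction hc using Submodule.span_induction with
  | mem c h =>
    obtain ⟨S, h1, -, rfl⟩ := h
    have := aff_mem_Dg S
    have : ∀ k, S.card ≤ k → Dg k (mon S) := by
      intro k hk
      induction k, hk using Nat.le_induction with
      | base => exact this
      | succ k _ ih => exact Dg_mono _ _ ih
    exact this 2 h1
  | zero => exact Dg_zero 2
  | add f g _ _ hf hg => exact Dg_add 2 f g hf hg
  | smul a f _ hf =>
    have := Dg_smul 2 a f hf
    convert this using 1
    funext x
    simp [mul_comm]

lemma Ccode_mixed {m m' : ℕ} {c : (Fin (m * m') → ZMod 2) → ZMod 2} (hc : c ∈ Ccode m m')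
    (i j : Fin (m * m')) (hij : i ≠ j) (hb : (i : ℕ) / m' = (j : ℕ) / m') :
    c (Pi.single i 1 + Pi.single j 1) + c (Pi.single i 1) + c (Pi.single j 1) + c 0 = 0 := by
  classical
  unfold Ccode at hc
  induction hc using Submodule.span_induction with
  | mem c h =>
    obtain ⟨S, -, h2, rfl⟩ := h
    have hS : i ∉ S ∨ j ∉ S := by
      by_contra! h
      have := h2 ((j : ℕ) / m')
      rw [Finset.card_le_one] at this
      exact hij (this i (by simp [h.1, hb]) j (by simp [h.2]))
    have gen : ∀ k ∉ S, ∀ x : Fin (m * m') → ZMod 2, mon S (x + Pi.single k 1) = mon S x := by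
      intro k hk x
      refine Finset.prod_congr rfl fun l hl => ?_
      have : l ≠ k := fun h => hk (h ▸ hl)
      simp [this]
    rcases hS with h | h
    · have e1 := gen i h (Pi.single j 1)
      have e2 := gen i h 0
      rw [zero_add] at e2
      rw [add_comm (Pi.single i 1 : Fin (m * m') → ZMod 2), e1, e2]
      linear_combination (mon S (Pi.single j 1) + mon S 0) * two0
    · have e1 := gen j h (Pi.single i 1)
      have e2 := gen j h 0
      rw [zero_add] at e2
      rw [e1, e2]
      linear_combination (mon S (Pi.single i 1) + mon S 0) * two0
  | zero => simp
  | add f g _ _ hf hg =>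
    simp only [Pi.add_apply]
    linear_combination hf + hg
  | smul a f _ hf =>
    simp only [Pi.smul_apply, smul_eq_mul]
    linear_combination a * hf

/-- vanishing of block minors -/
def Minor (m m' : ℕ) (u v : Fin (m * m') → ZMod 2) : Prop :=
  ∀ i j : Fin (m * m'), (i : ℕ) / m' = (j : ℕ) / m' → u i * v j = u j * v i

lemma Minor_of_mem {m m' : ℕ} (p q : (Fin (m * m') → ZMod 2) × ZMod 2)
    (h : (fun x => aff p x * aff q x) ∈ Ccode m m') : Minor m m' p.1 q.1 := by
  intro i j hb
  by_cases hij : i = j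
  · rw [hij]
  have := Ccode_mixed h i j hij hb
  simp only [aff, dotProduct_add, dotProduct_single, dotProduct_zero, mul_one] at this
  linear_combination this - (p.1 j * q.1 i + p.1 i * q.1 i + p.1 j * q.1 j + p.1 i * q.2 + p.2 * q.1 i + p.1 j * q.2 + p.2 * q.1 j + 2 * p.2 * q.2) * two0

lemma mem_of_Minor {m m' : ℕ} (p q : (Fin (m * m') → ZMod 2) × ZMod 2)
    (h : Minor m m' p.1 q.1) : (fun x => aff p x * aff q x) ∈ Ccode m m' := by
  classical
  have hone : (fun _ => 1 : (Fin (m * m') → ZMod 2) → ZMod 2) ∈ Ccode m m' :=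
    Submodule.subset_span ⟨∅, by simp, by simp, by funext x; simp [mon]⟩
  have hlin : ∀ i : Fin (m * m'), (fun x => x i : (Fin (m * m') → ZMod 2) → ZMod 2) ∈ Ccode m m' := by
    intro i
    refine Submodule.subset_span ⟨{i}, by simp, fun b => ?_, by funext x; simp [mon]⟩
    exact (Finset.card_filter_le _ _).trans (by simp)
  have hquad : ∀ i j : Fin (m * m'), (i : ℕ) / m' ≠ (j : ℕ) / m' →
      (fun x => x i * x j : (Fin (m * m') → ZMod 2) → ZMod 2) ∈ Ccode m m' := by
    intro i j hij
    have hne : i ≠ j := fun h => hij (by rw [h])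
    refine Submodule.subset_span ⟨{i, j}, Finset.card_le_two, fun b => ?_, by
      funext x; simp [mon, Finset.prod_pair hne]⟩
    rw [Finset.card_le_one]
    intro a ha c hc
    simp only [Finset.mem_filter, Finset.mem_insert, Finset.mem_singleton] at ha hc
    rcases ha with ⟨rfl | rfl, ha⟩ <;> rcases hc with ⟨rfl | rfl, hc⟩
    · rfl
    · exact absurd (ha.trans hc.symm) hij
    · exact absurd (hc.trans ha.symm) hij
    · rfl
  have hL : ∀ u : Fin (m * m') → ZMod 2, (fun x => u ⬝ᵥ x) ∈ Ccode m m' := by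
    intro u
    have : (fun x => u ⬝ᵥ x) = ∑ i, u i • (fun x => x i : (Fin (m * m') → ZMod 2) → ZMod 2) := by
      funext x; simp [dotProduct]
    rw [this]
    exact Submodule.sum_mem _ fun i _ => Submodule.smul_mem _ _ (hlin i)
  set u := p.1
  set v := q.1
  have hQ : (fun x => (u ⬝ᵥ x) * (v ⬝ᵥ x)) ∈ Ccode m m' := by
    have : (fun x => (u ⬝ᵥ x) * (v ⬝ᵥ x)) =
        (∑ ij ∈ Finset.univ.filter (fun ij : Fin (m * m') × Fin (m * m') => (ij.1 : ℕ) / m' ≠ (ij.2 : ℕ) / m'),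
          (u ij.1 * v ij.2) • (fun x => x ij.1 * x ij.2 : (Fin (m * m') → ZMod 2) → ZMod 2))
        + ∑ i, (u i * v i) • (fun x => x i : (Fin (m * m') → ZMod 2) → ZMod 2) := by
      funext x
      simp only [Pi.add_apply, Finset.sum_apply, Pi.smul_apply, smul_eq_mul]
      have e1 : (u ⬝ᵥ x) * (v ⬝ᵥ x) =
          ∑ ij : Fin (m * m') × Fin (m * m'), u ij.1 * v ij.2 * (x ij.1 * x ij.2) := by
        rw [Fintype.sum_prod_type, dotProduct, dotProduct, Finset.sum_mul_sum]
        refine Finset.sum_congr rfl fun i _ => Finset.sum_congr rfl fun j _ => by ring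
      rw [e1, ← Finset.sum_filter_add_sum_filter_not Finset.univ
        (fun ij : Fin (m * m') × Fin (m * m') => (ij.1 : ℕ) / m' ≠ (ij.2 : ℕ) / m')]
      congr 1
      rw [← Finset.sum_filter_add_sum_filter_not (Finset.univ.filter _)
        (fun ij : Fin (m * m') × Fin (m * m') => ij.1 = ij.2)]
      have e2 : ∑ ij ∈ (Finset.univ.filter (fun ij : Fin (m * m') × Fin (m * m') => 
          ¬ ((ij.1 : ℕ) / m' ≠ (ij.2 : ℕ) / m'))).filter (fun ij => ¬ ij.1 = ij.2),
          u ij.1 * v ij.2 * (x ij.1 * x ij.2) = 0 := by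
        refine Finset.sum_involution (fun ij _ => (ij.2, ij.1)) ?_ ?_ ?_ ?_
        · rintro ⟨i, j⟩ hij
          simp only [Finset.mem_filter, Finset.mem_univ, true_and, not_not] at hij
          simp only
          linear_combination (x i * x j) * (h i j hij.1) + u j * v i * x i * x j * two0
        · rintro ⟨i, j⟩ hij _ he
          simp only [Finset.mem_filter, Finset.mem_univ, true_and, not_not] at hij
          exact hij.2 (Prod.ext_iff.mp he).2
        · rintro ⟨i, j⟩ hij
          simp only [Finset.mem_filter, Finset.mem_univ, true_and, not_not] at hij ⊢
          exact ⟨hij.1.symm, fun h => hij.2 h.symm⟩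
        · rintro ⟨i, j⟩ hij
          rfl
      rw [e2, add_zero]
      symm
      refine Finset.sum_bij (fun i _ => (i, i)) ?_ ?_ ?_ ?_
      · intro i _; simp
      · intro i _ j _ h; exact (Prod.ext_iff.mp h).1
      · rintro ⟨i, j⟩ hij
        simp only [Finset.mem_filter, Finset.mem_univ, true_and, not_not] at hij
        exact ⟨i, Finset.mem_univ _, by simp [hij.2]⟩
      · intro i _
        have : x i * x i = x i := by generalize x i = s; revert s; decide
        simp only [this]
    rw [this]
    refine Submodule.add_mem _ (Submodule.sum_mem _ fun ij hij => Submodule.smul_mem _ _ (hquad _ _ ?_))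
      (Submodule.sum_mem _ fun i _ => Submodule.smul_mem _ _ (hlin i))
    simpa using hij
  have : (fun x => aff p x * aff q x) = (fun x => (u ⬝ᵥ x) * (v ⬝ᵥ x)) + q.2 • (fun x => u ⬝ᵥ x)
      + p.2 • (fun x => v ⬝ᵥ x) + (p.2 * q.2) • (fun _ => 1) := by
    funext x
    simp only [aff, Pi.add_apply, Pi.smul_apply, smul_eq_mul]
    ring
  rw [this]
  exact Submodule.add_mem _ (Submodule.add_mem _ (Submodule.add_mem _ hQ
    (Submodule.smul_mem _ _ (hL u))) (Submodule.smul_mem _ _ (hL v))) (Submodule.smul_mem _ _ hone)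

lemma zcases (a : ZMod 2) : a = 0 ∨ a = 1 := by revert a; decide

lemma rank_two_iff {ι : Type*} [Fintype ι] (A : Matrix (Fin 2) ι (ZMod 2)) :
    A.rank = 2 ↔ A 0 ≠ 0 ∧ A 1 ≠ 0 ∧ A 0 ≠ A 1 := by
  have h1 : A.rank = 2 ↔ LinearIndependent (ZMod 2) A.row := by
    constructor
    · intro h
      rw [linearIndependent_iff_card_eq_finrank_span]
      rw [Matrix.rank_eq_finrank_span_row] at h
      simp [Set.finrank, h]
    · intro h
      simpa using h.rank_matrix
  rw [h1]
  have : A.row = ![A 0, A 1] := by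
    funext i; fin_cases i <;> rfl
  rw [this, LinearIndependent.pair_iff]
  constructor
  · intro h
    refine ⟨fun h0 => ?_, fun h0 => ?_, fun h0 => ?_⟩
    · have := h 1 0 (by simp [h0]); simp at this
    · have := h 0 1 (by simp [h0]); simp at this
    · have := h 1 1 (by
        rw [h0]; funext i
        simp only [Pi.add_apply, Pi.smul_apply, smul_eq_mul, Pi.zero_apply]
        linear_combination A 1 i * two0)
      simp at this
  · rintro ⟨h0, h1, h2⟩ s t hst
    rcases zcases s with rfl | rfl <;> rcases zcases t with rfl | rfl
    · simp
    · simp at hst; exact absurd hst h1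
    · simp at hst; exact absurd hst h0
    · exfalso; apply h2
      funext i
      have := congrFun hst i
      simp only [Pi.add_apply, Pi.smul_apply, smul_eq_mul, Pi.zero_apply] at this
      linear_combination this - A 1 i * two0

lemma rank_le_one_iff {ι : Type*} [Fintype ι] (A : Matrix (Fin 2) ι (ZMod 2)) :
    A.rank ≤ 1 ↔ ∀ i j, A 0 i * A 1 j = A 0 j * A 1 i := by
  have h2 : A.rank ≤ 2 := by simpa using A.rank_le_card_height
  have : A.rank ≤ 1 ↔ ¬ A.rank = 2 := by omega
  rw [this, rank_two_iff]
  constructor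
  · intro h i j
    by_cases h0 : A 0 = 0
    · simp [h0]
    by_cases h1 : A 1 = 0
    · simp [h1]
    have h3 : A 0 = A 1 := by
      by_contra h3; exact h ⟨h0, h1, h3⟩
    rw [h3]; ring
  · rintro h ⟨h0, h1, h3⟩
    obtain ⟨i, hi⟩ := Function.ne_iff.mp h0
    have hi1 : A 0 i = 1 := (zcases _).resolve_left hi
    rcases zcases (A 1 i) with e | e
    · apply h1; funext j
      have := h i j
      rw [hi1, e] at this
      simpa using this
    · apply h3; funext j
      have := h i j
      rw [hi1, e] at this
      simpa using this.symm

lemma block_iff {m m' : ℕ} (A : Matrix (Fin 2) (Fin (m * m')) (ZMod 2)) :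
    (∀ b : ℕ, b < m → (blockMat m m' A b).rank ≤ 1) ↔ Minor m m' (A 0) (A 1) := by
  constructor
  · intro h i j hij
    have hb : (j : ℕ) / m' < m := Nat.div_lt_of_lt_mul (lt_of_lt_of_eq j.2 (mul_comm m m'))
    exact (rank_le_one_iff _).mp (h _ hb) ⟨i, hij⟩ ⟨j, rfl⟩
  · intro h b _
    rw [rank_le_one_iff]
    intro i j
    exact h i.1 j.1 (i.2.trans j.2.symm)

lemma prod_eq {n : ℕ} {c : (Fin n → ZMod 2) → ZMod 2} (hw : 4 * wt c = 2 ^ n)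
    {p q : (Fin n → ZMod 2) × ZMod 2} (hp : p ∈ Ec c) (hq : q ∈ Ec c) (hpq : p ≠ q) :
    p.1 ≠ q.1 ∧ (fun x => aff p x * aff q x) = c := by
  rw [mem_Ec] at hp hq
  have hw0 : 0 < wt c := by
    have : 0 < 2 ^ n := by positivity
    omega
  obtain ⟨x0, hx0⟩ := Finset.card_pos.mp hw0
  simp only [Finset.mem_filter, Finset.mem_univ, true_and] at hx0
  have hne : p.1 ≠ q.1 := by
    intro h
    apply hpq
    have h1 := hp.2 x0 hx0
    have h2 := hq.2 x0 hx0
    unfold aff at h1 h2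
    rw [h] at h1
    exact Prod.ext h (add_left_cancel (h1.trans h2.symm))
  refine ⟨hne, ?_⟩
  have hwp := wt_prod p q hp.1 hq.1 hne
  have := Finset.eq_of_subset_of_card_le (s := Finset.univ.filter fun x => c x = 1)
    (t := Finset.univ.filter fun x => aff p x * aff q x = 1) (by
      intro x hx
      simp only [Finset.mem_filter, Finset.mem_univ, true_and] at hx ⊢
      rw [hp.2 x hx, hq.2 x hx, mul_one]) (by
      change wt (fun x => aff p x * aff q x) ≤ wt c
      omega)
  funext x
  have hx := Finset.ext_iff.mp this x
  simp only [Finset.mem_filter, Finset.mem_univ, true_and] at hx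
  revert hx
  generalize aff p x * aff q x = s
  generalize c x = t
  revert s t; decide

end RSC

/-- `3·|{c ∈ C : wt(c) = 2^{n−2}}| = 2·|{A : rank(A) = 2, rank(A_i) ≤ 1 ∀i}|`. -/
theorem stmt_7 (m m' : ℕ) (hm : 2 ≤ m) (hm' : 2 ≤ m') :
    3 * Nat.card {c : (Fin (m * m') → ZMod 2) → ZMod 2 //
        c ∈ Ccode m m' ∧ wt c = 2 ^ (m * m' - 2)} =
    2 * Nat.card {A : Matrix (Fin 2) (Fin (m * m')) (ZMod 2) //
        A.rank = 2 ∧ ∀ b : ℕ, b < m → (blockMat m m' A b).rank ≤ 1} := by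
  classical
  set n := m * m' with hn
  have hn2 : 2 ≤ n := by nlinarith
  have hpow : 4 * 2 ^ (n - 2) = 2 ^ n := by
    obtain ⟨k, hk⟩ := Nat.exists_eq_add_of_le hn2
    rw [hk, Nat.add_sub_cancel_left, pow_add]; rfl
  have hwt : ∀ c : (Fin n → ZMod 2) → ZMod 2, wt c = 2 ^ (n - 2) ↔ 4 * wt c = 2 ^ n := by
    intro c; omega
  let W : Finset ((Fin n → ZMod 2) → ZMod 2) :=
    Finset.univ.filter fun c => c ∈ Ccode m m' ∧ wt c = 2 ^ (n - 2)
  let T : Finset (((Fin n → ZMod 2) × ZMod 2) × ((Fin n → ZMod 2) × ZMod 2)) :=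
    Finset.univ.filter fun t => (t.1.1 ≠ 0 ∧ t.2.1 ≠ 0 ∧ t.1.1 ≠ t.2.1) ∧ RSC.Minor m m' t.1.1 t.2.1
  have hT : ∀ t, t ∈ T ↔ (t.1.1 ≠ 0 ∧ t.2.1 ≠ 0 ∧ t.1.1 ≠ t.2.1) ∧ RSC.Minor m m' t.1.1 t.2.1 := by
    intro t; simp [T]
  have hW : ∀ c, c ∈ W ↔ c ∈ Ccode m m' ∧ wt c = 2 ^ (n - 2) := by
    intro c; simp [W]
  have cW : Nat.card {c : (Fin n → ZMod 2) → ZMod 2 //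
      c ∈ Ccode m m' ∧ wt c = 2 ^ (n - 2)} = W.card := by
    rw [Nat.card_eq_fintype_card, Fintype.card_subtype]
  have cT : T.card = 4 * Nat.card {A : Matrix (Fin 2) (Fin n) (ZMod 2) //
        A.rank = 2 ∧ ∀ b : ℕ, b < m → (blockMat m m' A b).rank ≤ 1} := by
    have e : {t // t ∈ T} ≃ {A : Matrix (Fin 2) (Fin n) (ZMod 2) //
        A.rank = 2 ∧ ∀ b : ℕ, b < m → (blockMat m m' A b).rank ≤ 1} × (ZMod 2 × ZMod 2) :=
      { toFun := fun t => (⟨Matrix.of ![t.1.1.1, t.1.2.1],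
          ⟨(RSC.rank_two_iff _).mpr ((hT _).mp t.2).1, (RSC.block_iff _).mpr ((hT _).mp t.2).2⟩⟩, (t.1.1.2, t.1.2.2))
        invFun := fun s => ⟨((s.1.1 0, s.2.1), (s.1.1 1, s.2.2)), by
          rw [hT]
          have := s.1.2
          rw [RSC.rank_two_iff, RSC.block_iff] at this
          exact this⟩
        left_inv := fun t => rfl
        right_inv := fun s => by
          refine Prod.ext (Subtype.ext ?_) rfl
          funext i
          fin_cases i <;> rfl }
    have := Nat.card_congr e
    rw [Nat.card_prod, Nat.card_prod, Nat.card_zmod] at this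
    simp only [Nat.card_eq_fintype_card, Fintype.card_coe] at this ⊢
    omega
  have key : T.card = 6 * W.card := by
    have maps : ∀ t ∈ T, (fun x => RSC.aff t.1 x * RSC.aff t.2 x) ∈ W := by
      intro t ht
      rw [hT] at ht
      rw [hW, hwt]
      exact ⟨RSC.mem_of_Minor _ _ ht.2, RSC.wt_prod _ _ ht.1.1 ht.1.2.1 ht.1.2.2⟩
    rw [Finset.card_eq_sum_card_fiberwise maps]
    have : ∀ c ∈ W, (T.filter fun t => (fun x => RSC.aff t.1 x * RSC.aff t.2 x) = c).card = 6 := by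
      intro c hc
      rw [hW, hwt] at hc
      have h3 := RSC.Ec_card c (RSC.Ccode_Dg hc.1) hc.2
      have : (T.filter fun t => (fun x => RSC.aff t.1 x * RSC.aff t.2 x) = c) = (RSC.Ec c).offDiag := by
        ext t
        rw [Finset.mem_filter, Finset.mem_offDiag, hT]
        constructor
        · rintro ⟨⟨⟨h1, h2, h4⟩, -⟩, h⟩
          have hx : ∀ x, c x = 1 → RSC.aff t.1 x = 1 ∧ RSC.aff t.2 x = 1 := by
            intro x hx
            rw [← h] at hx
            revert hx
            simp only
            generalize RSC.aff t.1 x = s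
            generalize RSC.aff t.2 x = r
            revert s r; decide
          rw [RSC.mem_Ec, RSC.mem_Ec]
          exact ⟨⟨h1, fun x h => (hx x h).1⟩, ⟨h2, fun x h => (hx x h).2⟩, fun h => h4 (by rw [h])⟩
        · rintro ⟨h1, h2, h4⟩
          obtain ⟨h5, h6⟩ := RSC.prod_eq hc.2 h1 h2 h4
          refine ⟨⟨⟨((RSC.mem_Ec _ _).mp h1).1, ((RSC.mem_Ec _ _).mp h2).1, h5⟩, ?_⟩, h6⟩
          apply RSC.Minor_of_mem
          rw [h6]; exact hc.1
      rw [this, Finset.offDiag_card, h3]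
    rw [Finset.sum_congr rfl this, Finset.sum_const, smul_eq_mul, mul_comm]
  rw [cW]
  rw [key] at cT
  refine Nat.eq_of_mul_eq_mul_left (show 0 < 2 by norm_num) ?_
  rw [← mul_assoc, ← mul_assoc]
  exact cT
end

section
/- For integers μ ≥ 1 and h, let N₂(μ,h) denote the number of symmetric 2μ×2μ matrices over ZMod 2, with all m diagonal 2×2 blocks zero, that have rank exactly h (so N₂(μ,h) = 0 if h < 0 or h > 2μ, and N₂(μ,0) = 1). Then for every m ≥ 2 and every 1 ≤ h ≤ 2m, the following identity holds in ℚ: N₂(m,h) = t₁·N₂(m−1,h) + t₂·N₂(m−1,h−2) + t₃·N₂(m−1,h−4), where t₁ = 2^{h−1} + 2^{2h−1}, t₂ = 3·2^{2m−4+h} − 5·2^{2h−5} − 2^{h−3}, and t₃ = −3·2^{2m−6+h} + 2^{4m−4} + 2^{2h−7}, with 2^k denoting the rational power of 2 (the exponent k ∈ ℤ may be negative). -/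
/-- `N₂(μ,h)`: the number of symmetric `2μ × 2μ` matrices over `ZMod 2`, with all `μ`
diagonal `2 × 2` blocks zero, of rank exactly `h` (automatically `0` for `h < 0` or
`h > 2μ`). -/
noncomputable def N2 (mu : ℕ) (h : ℤ) : ℕ :=
  Nat.card {B : Matrix (Fin (2 * mu)) (Fin (2 * mu)) (ZMod 2) //
    (∀ i j, B i j = B j i) ∧
    (∀ i j : Fin (2 * mu), (i : ℕ) / 2 = (j : ℕ) / 2 → B i j = 0) ∧
    (B.rank : ℤ) = h}

/-- Border a square matrix by a row/column `u` with zero corner. -/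
def bord {n : ℕ} (A : Matrix (Fin n) (Fin n) (ZMod 2)) (u : Fin n → ZMod 2) :
    Matrix (Fin (n + 1)) (Fin (n + 1)) (ZMod 2) :=
  Matrix.of (Fin.snoc (α := fun _ => Fin (n + 1) → ZMod 2)
    (fun i => Fin.snoc (α := fun _ => ZMod 2) (A i) (u i)) (Fin.snoc (α := fun _ => ZMod 2) u 0))

/-- Append a zero. -/
def ext0 {n : ℕ} (v : Fin n → ZMod 2) (t : ZMod 2) : Fin (n + 1) → ZMod 2 :=
  Fin.snoc (α := fun _ => ZMod 2) v t

@[simp] lemma ext0_c {n : ℕ} (v : Fin n → ZMod 2) (t : ZMod 2) (i : Fin n) :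
    ext0 v t i.castSucc = v i := by simp [ext0]
@[simp] lemma ext0_l {n : ℕ} (v : Fin n → ZMod 2) (t : ZMod 2) :
    ext0 v t (Fin.last n) = t := by simp [ext0]

section
variable {n : ℕ} (A : Matrix (Fin n) (Fin n) (ZMod 2)) (u : Fin n → ZMod 2)

@[simp] lemma bord_cc (i j : Fin n) : bord A u i.castSucc j.castSucc = A i j := by simp [bord]
@[simp] lemma bord_cl (i : Fin n) : bord A u i.castSucc (Fin.last n) = u i := by simp [bord]
@[simp] lemma bord_lc (i : Fin n) : bord A u (Fin.last n) i.castSucc = u i := by simp [bord]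
@[simp] lemma bord_ll : bord A u (Fin.last n) (Fin.last n) = 0 := by simp [bord]
end

/-- Alternating matrices. -/
def Alt {n : ℕ} (A : Matrix (Fin n) (Fin n) (ZMod 2)) : Prop :=
  (∀ i j, A i j = A j i) ∧ ∀ i, A i i = 0

lemma Alt.bord {n : ℕ} {A : Matrix (Fin n) (Fin n) (ZMod 2)} (h : Alt A) (u : Fin n → ZMod 2) :
    Alt (bord A u) := by
  refine ⟨?_, ?_⟩
  · intro i j
    refine Fin.lastCases ?_ (fun i => ?_) i <;> refine Fin.lastCases ?_ (fun j => ?_) j <;>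
      simp [h.1]
  · intro i
    refine Fin.lastCases ?_ (fun i => ?_) i <;> simp [h.2]

open Matrix

lemma bord_mulVec {n : ℕ} (A : Matrix (Fin n) (Fin n) (ZMod 2)) (u x : Fin n → ZMod 2)
    (t : ZMod 2) : bord A u *ᵥ ext0 x t = ext0 (A *ᵥ x + t • u) (u ⬝ᵥ x) := by
  funext i
  refine Fin.lastCases ?_ (fun i => ?_) i
  · simp [Matrix.mulVec, dotProduct, Fin.sum_univ_castSucc]
  · simp [Matrix.mulVec, dotProduct, Fin.sum_univ_castSucc, mul_comm]

lemma ext0_surj {n : ℕ} (w : Fin (n + 1) → ZMod 2) :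
    w = ext0 (fun i => w i.castSucc) (w (Fin.last n)) := by
  funext i
  refine Fin.lastCases ?_ (fun i => ?_) i <;> simp

lemma ext0_inj {n : ℕ} {v v' : Fin n → ZMod 2} {t t' : ZMod 2} :
    ext0 v t = ext0 v' t' ↔ v = v' ∧ t = t' := by
  constructor
  · intro h
    refine ⟨funext fun i => ?_, ?_⟩
    · simpa using congrFun h i.castSucc
    · simpa using congrFun h (Fin.last n)
  · rintro ⟨rfl, rfl⟩; rfl

lemma Alt.symm_dot {n : ℕ} {A : Matrix (Fin n) (Fin n) (ZMod 2)} (h : Alt A)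
    (x y : Fin n → ZMod 2) : x ⬝ᵥ A *ᵥ y = (A *ᵥ x) ⬝ᵥ y := by
  have hT : Aᵀ = A := by ext i j; exact h.1 j i
  rw [Matrix.dotProduct_mulVec, ← Matrix.mulVec_transpose, hT]

lemma zmod2_cases (t : ZMod 2) : t = 0 ∨ t = 1 := by
  revert t; decide

lemma zmod2_add_self {n : ℕ} (x : Fin n → ZMod 2) : x + x = 0 := by
  funext i; exact CharTwo.add_self_eq_zero _

lemma Alt.self_dot {n : ℕ} {A : Matrix (Fin n) (Fin n) (ZMod 2)} (h : Alt A)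
    (x : Fin n → ZMod 2) : x ⬝ᵥ A *ᵥ x = 0 := by
  have h1 : x ⬝ᵥ A *ᵥ x = ∑ p : Fin n × Fin n, x p.1 * A p.1 p.2 * x p.2 := by
    rw [Fintype.sum_prod_type]
    simp [Matrix.mulVec, dotProduct, Finset.mul_sum, mul_assoc]
  rw [h1]
  refine Finset.sum_involution (fun p _ => (p.2, p.1)) ?_ ?_ ?_ ?_
  · intro p _
    have : x p.2 * A p.2 p.1 * x p.1 = x p.1 * A p.1 p.2 * x p.2 := by rw [h.1 p.2 p.1]; ring
    simp only [this]
    exact CharTwo.add_self_eq_zero _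
  · rintro ⟨a, b⟩ _ hne heq
    simp only [Prod.mk.injEq] at heq
    obtain ⟨rfl, _⟩ := heq
    simp [h.2] at hne
  · simp
  · simp

/-- column space -/
abbrev colS {n : ℕ} (A : Matrix (Fin n) (Fin n) (ZMod 2)) : Submodule (ZMod 2) (Fin n → ZMod 2) :=
  LinearMap.range A.mulVecLin

lemma mem_col {n : ℕ} {A : Matrix (Fin n) (Fin n) (ZMod 2)} {v : Fin n → ZMod 2} :
    v ∈ colS A ↔ ∃ x, A *ᵥ x = v := by simp [colS]

lemma card_col {n : ℕ} (A : Matrix (Fin n) (Fin n) (ZMod 2)) :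
    Nat.card (colS A) = 2 ^ A.rank := by
  rw [Module.natCard_eq_pow_finrank (K := ZMod 2)]; simp [Matrix.rank]

lemma card_ker {n : ℕ} (A : Matrix (Fin n) (Fin n) (ZMod 2)) :
    2 ^ A.rank * Nat.card {x : Fin n → ZMod 2 // A *ᵥ x = 0} = 2 ^ n := by
  have h := LinearMap.finrank_range_add_finrank_ker A.mulVecLin
  have h2 : Nat.card {x : Fin n → ZMod 2 // A *ᵥ x = 0} =
      Nat.card (LinearMap.ker A.mulVecLin) := Nat.card_congr (Equiv.subtypeEquivRight (by simp))
  rw [h2, Module.natCard_eq_pow_finrank (K := ZMod 2)]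
  simp only [Nat.card_zmod]
  rw [← pow_add]; congr 1
  simpa [Matrix.rank] using h

/-- half of a subspace is killed by a nonzero functional -/
lemma card_half {n : ℕ} (S : Submodule (ZMod 2) (Fin n → ZMod 2))
    (f : (Fin n → ZMod 2) →ₗ[ZMod 2] ZMod 2) (hf : ∃ y ∈ S, f y ≠ 0) :
    2 * Nat.card {x : Fin n → ZMod 2 // x ∈ S ∧ f x = 0} = Nat.card S := by
  obtain ⟨y, hy, hfy⟩ := hf
  have hy1 : f y = 1 := (zmod2_cases _).resolve_left hfy
  let e : ZMod 2 × {x : Fin n → ZMod 2 // x ∈ S ∧ f x = 0} ≃ S :=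
    { toFun := fun p => ⟨p.1 • y + p.2.1, S.add_mem (S.smul_mem _ hy) p.2.2.1⟩
      invFun := fun x => (f x.1, ⟨x.1 - f x.1 • y, S.sub_mem x.2 (S.smul_mem _ hy), by simp [hy1]⟩)
      left_inv := by
        rintro ⟨t, x, hx, hfx⟩
        simp [hy1, hfx]
      right_inv := by
        rintro ⟨x, hx⟩
        simp }
  rw [← Nat.card_congr e, Nat.card_prod]; simp

lemma rank_bord_mem {n : ℕ} {A : Matrix (Fin n) (Fin n) (ZMod 2)} (h : Alt A)
    {u : Fin n → ZMod 2} (hu : u ∈ colS A) : (bord A u).rank = A.rank := by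
  obtain ⟨x0, rfl⟩ := mem_col.1 hu
  have key : Nat.card {w : Fin (n + 1) → ZMod 2 // bord A (A *ᵥ x0) *ᵥ w = 0} =
      2 * Nat.card {x : Fin n → ZMod 2 // A *ᵥ x = 0} := by
    let e : ZMod 2 × {x : Fin n → ZMod 2 // A *ᵥ x = 0} ≃
        {w : Fin (n + 1) → ZMod 2 // bord A (A *ᵥ x0) *ᵥ w = 0} :=
      { toFun := fun p => ⟨ext0 (p.2.1 - p.1 • x0) p.1, by
          rw [bord_mulVec, ← h.symm_dot, Matrix.mulVec_sub, p.2.2, Matrix.mulVec_smul]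
          have h0 : (0 : Fin (n + 1) → ZMod 2) = ext0 0 0 := ext0_surj 0
          rw [h0, ext0_inj]
          simp [h.self_dot]⟩
        invFun := fun w => (w.1 (Fin.last n),
          ⟨(fun i => w.1 i.castSucc) + w.1 (Fin.last n) • x0, by
            obtain ⟨w, hw⟩ := w
            rw [ext0_surj w, bord_mulVec] at hw
            have h0 : (0 : Fin (n + 1) → ZMod 2) = ext0 0 0 := ext0_surj 0
            rw [h0, ext0_inj] at hw
            rw [Matrix.mulVec_add, Matrix.mulVec_smul]
            exact hw.1⟩)
        left_inv := by
          rintro ⟨t, x, hx⟩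
          simp only [ext0_l, ext0_c, Prod.mk.injEq, Subtype.mk.injEq, true_and]
          funext i; simp
        right_inv := by
          rintro ⟨w, hw⟩
          apply Subtype.ext
          refine Eq.trans ?_ (ext0_surj w).symm
          rw [ext0_inj]
          simp }
    rw [← Nat.card_congr e, Nat.card_prod]; simp
  have h1 := card_ker (bord A (A *ᵥ x0))
  have h2 := card_ker A
  rw [key, pow_succ, ← h2] at h1
  have hpos : 0 < Nat.card {x : Fin n → ZMod 2 // A *ᵥ x = 0} :=
    Nat.pos_of_ne_zero (fun h0 => by rw [h0] at h2; simp at h2; exact absurd h2.symm (by positivity))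
  have : 2 ^ (bord A (A *ᵥ x0)).rank = 2 ^ A.rank := by
    apply Nat.eq_of_mul_eq_mul_right (Nat.mul_pos two_pos hpos)
    linarith
  exact Nat.pow_right_injective le_rfl this

lemma exists_ker_of_not_mem {n : ℕ} {A : Matrix (Fin n) (Fin n) (ZMod 2)} (h : Alt A)
    {u : Fin n → ZMod 2} (hu : u ∉ colS A) : ∃ y, A *ᵥ y = 0 ∧ u ⬝ᵥ y ≠ 0 := by
  obtain ⟨f, hf, hS⟩ := Submodule.exists_le_ker_of_notMem hu
  have hd : ∀ w, f w = w ⬝ᵥ fun i => f (Pi.single i 1) := by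
    intro w
    rw [LinearMap.pi_apply_eq_sum_univ f w]
    simp only [dotProduct, smul_eq_mul]
    refine Finset.sum_congr rfl fun i _ => ?_
    congr 2
    funext j
    simp [Pi.single_apply, eq_comm]
  refine ⟨fun i => f (Pi.single i 1), ?_, ?_⟩
  · apply dotProduct_eq_zero
    intro w
    rw [← h.symm_dot, dotProduct_comm, ← hd]
    exact hS (mem_col.2 ⟨w, rfl⟩)
  · rw [← hd]; exact hf

lemma rank_bord_not_mem {n : ℕ} {A : Matrix (Fin n) (Fin n) (ZMod 2)} (h : Alt A)
    {u : Fin n → ZMod 2} (hu : u ∉ colS A) : (bord A u).rank = A.rank + 2 := by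
  obtain ⟨y, hy, huy⟩ := exists_ker_of_not_mem h hu
  have key : Nat.card {w : Fin (n + 1) → ZMod 2 // bord A u *ᵥ w = 0} =
      Nat.card {x : Fin n → ZMod 2 //
        x ∈ LinearMap.ker A.mulVecLin ∧ dotProductBilin (ZMod 2) (ZMod 2) u x = 0} := by
    refine Nat.card_congr ?_
    have hz : ∀ w : {w : Fin (n + 1) → ZMod 2 // bord A u *ᵥ w = 0},
        A *ᵥ (fun i => w.1 i.castSucc) = 0 ∧ u ⬝ᵥ (fun i => w.1 i.castSucc) = 0 ∧
          w.1 (Fin.last n) = 0 := by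
      rintro ⟨w, hw⟩
      rw [ext0_surj w, bord_mulVec] at hw
      have h0 : (0 : Fin (n + 1) → ZMod 2) = ext0 0 0 := ext0_surj 0
      rw [h0, ext0_inj] at hw
      rcases zmod2_cases (w (Fin.last n)) with ht | ht
      · rw [ht] at hw
        simp only [zero_smul, add_zero] at hw
        exact ⟨by simpa using hw.1, hw.2, ht⟩
      · exfalso
        rw [ht] at hw
        apply hu
        rw [mem_col]
        refine ⟨fun i => w i.castSucc, ?_⟩
        have h3 := hw.1
        rw [one_smul] at h3
        rw [eq_neg_of_add_eq_zero_left h3]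
        rw [neg_eq_iff_add_eq_zero, zmod2_add_self]
    exact
      { toFun := fun w => ⟨fun i => w.1 i.castSucc, by simpa using (hz w).1,
          by simpa using (hz w).2.1⟩
        invFun := fun x => ⟨ext0 x.1 0, by
          have h3 := x.2
          simp only [LinearMap.mem_ker, Matrix.mulVecLin_apply] at h3
          rw [bord_mulVec, h3.1]
          have h0 : (0 : Fin (n + 1) → ZMod 2) = ext0 0 0 := ext0_surj 0
          rw [h0, ext0_inj]
          exact ⟨by simp, h3.2⟩⟩
        left_inv := by
          intro w
          apply Subtype.ext
          conv_rhs => rw [ext0_surj w.1]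
          rw [ext0_inj]
          simp [(hz w).2.2]
        right_inv := by
          intro x
          apply Subtype.ext
          simp }
  have h3 := card_half (LinearMap.ker A.mulVecLin) (dotProductBilin (ZMod 2) (ZMod 2) u)
    ⟨y, by simpa using hy, huy⟩
  have h1 := card_ker (bord A u)
  have h2 := card_ker A
  have h4 : Nat.card {x : Fin n → ZMod 2 // A *ᵥ x = 0} =
      Nat.card (LinearMap.ker A.mulVecLin) := Nat.card_congr (Equiv.subtypeEquivRight (by simp))
  rw [h4, ← h3] at h2
  rw [key] at h1
  set q := Nat.card {x : Fin n → ZMod 2 //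
        x ∈ LinearMap.ker A.mulVecLin ∧ dotProductBilin (ZMod 2) (ZMod 2) u x = 0} with hq
  rw [pow_succ, ← h2] at h1
  have hpos : 0 < q :=
    Nat.pos_of_ne_zero (fun h0 => by rw [h0] at h2; simp at h2; exact absurd h2.symm (by positivity))
  have : 2 ^ (bord A u).rank = 2 ^ (A.rank + 2) := by
    apply Nat.eq_of_mul_eq_mul_right hpos
    rw [h1]; ring
  exact Nat.pow_right_injective le_rfl this

open Classical in
/-- count of `v` with `(v,0)` in the column space of the bordered matrix -/
lemma card_ext_mem {n : ℕ} (A : Matrix (Fin n) (Fin n) (ZMod 2)) {u : Fin n → ZMod 2}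
    (hu : u ≠ 0) :
    ((Finset.univ.filter fun v : Fin n → ZMod 2 => ext0 v 0 ∈ colS (bord A u)).card : ℚ) =
      2 ^ ((bord A u).rank : ℤ) / 2 := by
  have h := card_half (colS (bord A u)) (LinearMap.proj (Fin.last n)) (by
    obtain ⟨i, hi⟩ := Function.ne_iff.1 hu
    refine ⟨bord A u *ᵥ ext0 (Pi.single i 1) 0, mem_col.2 ⟨_, rfl⟩, ?_⟩
    rw [bord_mulVec]
    simpa using hi)
  rw [card_col] at h
  have e : {v : Fin n → ZMod 2 // ext0 v 0 ∈ colS (bord A u)} ≃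
      {x : Fin (n + 1) → ZMod 2 // x ∈ colS (bord A u) ∧
        (LinearMap.proj (R := ZMod 2) (φ := fun _ => ZMod 2) (Fin.last n)) x = 0} :=
    { toFun := fun v => ⟨ext0 v.1 0, v.2, by simp⟩
      invFun := fun x => ⟨fun i => x.1 i.castSucc, by
        have hx := x.2
        have h2 : x.1 (Fin.last n) = 0 := hx.2
        have h3 := ext0_surj x.1
        rw [h2] at h3
        rw [← h3]; exact hx.1⟩
      left_inv := by intro v; apply Subtype.ext; simp
      right_inv := by
        intro x
        apply Subtype.ext
        have h2 : x.1 (Fin.last n) = 0 := x.2.2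
        conv_rhs => rw [ext0_surj x.1, h2] }
  rw [← Nat.card_congr e, Nat.card_eq_fintype_card, Fintype.card_subtype] at h
  have h' := congrArg (fun z : ℕ => (z : ℚ)) h
  push_cast at h'
  rw [zpow_natCast, ← h']
  ring

open Classical in
lemma card_ext_mem_zero {n : ℕ} (A : Matrix (Fin n) (Fin n) (ZMod 2)) :
    ((Finset.univ.filter fun v : Fin n → ZMod 2 => ext0 v 0 ∈ colS (bord A 0)).card : ℚ) =
      2 ^ (A.rank : ℤ) := by
  have h := card_col A
  have : ∀ v : Fin n → ZMod 2, ext0 v 0 ∈ colS (bord A 0) ↔ v ∈ colS A := by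
    intro v
    rw [mem_col, mem_col]
    constructor
    · rintro ⟨x, hx⟩
      rw [ext0_surj x, bord_mulVec, ext0_inj] at hx
      exact ⟨_, by simpa using hx.1⟩
    · rintro ⟨x, hx⟩
      exact ⟨ext0 x 0, by rw [bord_mulVec, ext0_inj]; simp [hx]⟩
  simp only [this]
  rw [← Fintype.card_subtype, ← Nat.card_eq_fintype_card]
  rw [zpow_natCast]
  exact_mod_cast h

open Classical in
lemma sum_ite2 {α : Type*} [Fintype α] (p : α → Prop) (X Y : ℚ) :
    ∑ v, (if p v then X else Y) =
      (Finset.univ.filter p).card * X + (Fintype.card α - (Finset.univ.filter p).card) * Y := by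
  rw [Finset.sum_ite]
  simp only [Finset.sum_const, nsmul_eq_mul]
  have := Finset.card_filter_add_card_filter_not (s := (Finset.univ : Finset α)) p
  rw [Finset.card_univ] at this
  rw [← this]; push_cast; ring

/-- indicator -/
noncomputable def ind (r h : ℤ) : ℚ := if r = h then 1 else 0

open Classical in
lemma sum_v {n : ℕ} {A : Matrix (Fin n) (Fin n) (ZMod 2)} (hA : Alt A) (u : Fin n → ZMod 2)
    (h : ℤ) :
    ∑ v : Fin n → ZMod 2, ind ((bord (bord A u) (ext0 v 0)).rank) h =
      if u = 0 then 2 ^ (A.rank : ℤ) * ind A.rank h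
          + (2 ^ (n : ℤ) - 2 ^ (A.rank : ℤ)) * ind (A.rank + 2) h
      else if u ∈ colS A then 2 ^ (A.rank : ℤ) / 2 * ind A.rank h
          + (2 ^ (n : ℤ) - 2 ^ (A.rank : ℤ) / 2) * ind (A.rank + 2) h
      else 2 ^ (A.rank : ℤ) * 2 * ind (A.rank + 2) h
          + (2 ^ (n : ℤ) - 2 ^ (A.rank : ℤ) * 2) * ind (A.rank + 4) h := by
  have h1 : ∀ v : Fin n → ZMod 2, ind ((bord (bord A u) (ext0 v 0)).rank) h =
      if ext0 v 0 ∈ colS (bord A u) then ind (bord A u).rank h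
        else ind ((bord A u).rank + 2) h := by
    intro v
    split_ifs with hv
    · rw [rank_bord_mem (hA.bord u) hv]
    · rw [rank_bord_not_mem (hA.bord u) hv]; push_cast; rfl
  have hc : ((Fintype.card (Fin n → ZMod 2) : ℕ) : ℚ) = 2 ^ (n : ℤ) := by
    simp [ZMod.card]
  simp only [h1]
  rw [sum_ite2, hc]
  split_ifs with h0 hu
  · subst h0
    rw [card_ext_mem_zero, rank_bord_mem hA (Submodule.zero_mem _)]
  · rw [card_ext_mem A h0, rank_bord_mem hA hu]
  · rw [card_ext_mem A h0, rank_bord_not_mem hA hu]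
    push_cast
    rw [zpow_add₀ (by norm_num)]
    rw [show (A.rank : ℤ) + 2 + 2 = A.rank + 4 by ring]
    norm_num
    ring

open Classical in
lemma sum_uv {n : ℕ} {A : Matrix (Fin n) (Fin n) (ZMod 2)} (hA : Alt A) (h : ℤ) :
    ∑ u : Fin n → ZMod 2, ∑ v : Fin n → ZMod 2, ind ((bord (bord A u) (ext0 v 0)).rank) h =
      ((2 : ℚ) ^ (h - 1) + 2 ^ (2 * h - 1)) * ind A.rank h +
      (3 * (2 : ℚ) ^ ((n : ℤ) - 2 + h) - 5 * 2 ^ (2 * h - 5) - 2 ^ (h - 3)) *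
        ind A.rank (h - 2) +
      (-3 * (2 : ℚ) ^ ((n : ℤ) - 4 + h) + 2 ^ (2 * (n : ℤ)) + 2 ^ (2 * h - 7)) *
        ind A.rank (h - 4) := by
  simp only [sum_v hA]
  have hsum : ∀ X Y Z : ℚ, ∑ u : Fin n → ZMod 2, (if u = 0 then X else if u ∈ colS A then Y else Z)
      = X + (2 ^ (A.rank : ℤ) - 1) * Y + (2 ^ (n : ℤ) - 2 ^ (A.rank : ℤ)) * Z := by
    intro X Y Z
    have h1 : ∀ u : Fin n → ZMod 2, (if u = 0 then X else if u ∈ colS A then Y else Z) =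
        (if u ∈ colS A then Y else Z) + (if u = 0 then X - Y else 0) := by
      intro u
      split_ifs with h0 h2 h2
      · ring
      · exact absurd (h0 ▸ Submodule.zero_mem _) h2
      · ring
      · ring
    simp only [h1]
    rw [Finset.sum_add_distrib, sum_ite2, Finset.sum_ite_eq']
    have hc : ((Fintype.card (Fin n → ZMod 2) : ℕ) : ℚ) = 2 ^ (n : ℤ) := by
      simp [ZMod.card]
    have h2 := card_col A
    have h3 : ((Finset.univ.filter fun u => u ∈ colS A).card : ℚ) = 2 ^ (A.rank : ℤ) := by
      rw [← Fintype.card_subtype, ← Nat.card_eq_fintype_card, zpow_natCast]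
      exact_mod_cast h2
    rw [h3, hc]
    simp
    ring
  rw [hsum]
  generalize (A.rank : ℤ) = r
  have e0 : (2 : ℚ) ≠ 0 := by norm_num
  unfold ind
  have two : ∀ a : ℤ, (2 : ℚ) ^ (2 * a) = 2 ^ a * 2 ^ a := fun a => by
    rw [two_mul, zpow_add₀ e0]
  by_cases c1 : r = h
  · subst c1
    rw [if_pos rfl, if_neg (by omega), if_neg (by omega), if_neg (by omega), if_neg (by omega)]
    simp [zpow_sub₀ e0, two]
    ring
  by_cases c2 : r + 2 = h
  · subst c2
    rw [if_neg (by omega), if_pos rfl, if_neg (by omega), if_pos (by omega), if_neg (by omega)]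
    simp [zpow_sub₀ e0, zpow_add₀ e0, two]
    ring
  by_cases c3 : r + 4 = h
  · subst c3
    rw [if_neg (by omega), if_neg (by omega), if_pos rfl, if_neg (by omega), if_pos (by omega)]
    simp [zpow_sub₀ e0, zpow_add₀ e0, two]
    ring
  have c4 : ¬ r = h - 2 := by omega
  have c5 : ¬ r = h - 4 := by omega
  simp [c1, c2, c3, c4, c5]

/-- the structural condition -/
def Good (k : ℕ) (B : Matrix (Fin (2 * k)) (Fin (2 * k)) (ZMod 2)) : Prop :=
  (∀ i j, B i j = B j i) ∧ (∀ i j : Fin (2 * k), (i : ℕ) / 2 = (j : ℕ) / 2 → B i j = 0)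

lemma Good.alt {k : ℕ} {B : Matrix (Fin (2 * k)) (Fin (2 * k)) (ZMod 2)} (h : Good k B) :
    Alt B := ⟨h.1, fun i => h.2 i i rfl⟩

open Classical in
lemma N2_eq (k : ℕ) (h : ℤ) :
    (N2 k h : ℚ) = ∑ B : {B // Good k B}, ind B.1.rank h := by
  have e : {B : Matrix (Fin (2 * k)) (Fin (2 * k)) (ZMod 2) //
    (∀ i j, B i j = B j i) ∧
    (∀ i j : Fin (2 * k), (i : ℕ) / 2 = (j : ℕ) / 2 → B i j = 0) ∧
    (B.rank : ℤ) = h} ≃ {B : {B // Good k B} // (B.1.rank : ℤ) = h} :=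
    { toFun := fun B => ⟨⟨B.1, B.2.1, B.2.2.1⟩, B.2.2.2⟩
      invFun := fun B => ⟨B.1.1, B.1.2.1, B.1.2.2, B.2⟩
      left_inv := fun _ => rfl
      right_inv := fun _ => rfl }
  unfold N2 ind
  rw [Nat.card_congr e, Nat.card_eq_fintype_card, Fintype.card_subtype, Finset.sum_boole]

/-- decomposition -/
def decomp (k : ℕ) : ({A // Good k A} × (Fin (2 * k) → ZMod 2) × (Fin (2 * k) → ZMod 2)) ≃
    {B // Good (k + 1) B} where
  toFun p := ⟨bord (bord p.1.1 p.2.1) (ext0 p.2.2 0), by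
    refine ⟨((p.1.2.alt.bord _).bord _).1, ?_⟩
    intro i j
    refine Fin.lastCases (n := 2 * k + 1) ?_ (fun i => ?_) i <;>
      refine Fin.lastCases (n := 2 * k + 1) ?_ (fun j => ?_) j
    · intro _; exact bord_ll _ _
    · refine Fin.lastCases ?_ (fun j => ?_) j
      · intro _; exact (bord_lc _ _ _).trans (ext0_l _ _)
      · intro hh; exfalso
        have := j.2
        simp at hh
        omega
    · refine Fin.lastCases ?_ (fun i => ?_) i
      · intro _; exact (bord_cl _ _ _).trans (ext0_l _ _)
      · intro hh; exfalso
        have := i.2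
        simp at hh
        omega
    · intro hh
      refine (bord_cc _ _ _ _).trans ?_
      revert hh
      refine Fin.lastCases ?_ (fun i => ?_) i <;> refine Fin.lastCases ?_ (fun j => ?_) j
      · intro _; exact bord_ll _ _
      · intro hh; exfalso
        have := j.2
        simp at hh
        omega
      · intro hh; exfalso
        have := i.2
        simp at hh
        omega
      · intro hh
        refine (bord_cc _ _ _ _).trans (p.1.2.2 i j ?_)
        simpa using hh⟩
  invFun B := (⟨fun i j => B.1 (Fin.castSucc (n := 2 * k + 1) i.castSucc)
      (Fin.castSucc (n := 2 * k + 1) j.castSucc),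
      fun i j => B.2.1 _ _, fun i j hij => B.2.2 _ _ (by simpa using hij)⟩,
    fun i => B.1 (Fin.castSucc (n := 2 * k + 1) i.castSucc)
      (Fin.castSucc (n := 2 * k + 1) (Fin.last _)),
    fun i => B.1 (Fin.castSucc (n := 2 * k + 1) i.castSucc) (Fin.last (2 * k + 1)))
  left_inv := by
    rintro ⟨⟨A, hA⟩, u, v⟩
    refine Prod.ext (Subtype.ext ?_) (Prod.ext ?_ ?_)
    · funext i j
      exact (bord_cc _ _ _ _).trans (bord_cc _ _ _ _)
    · funext i
      exact (bord_cc _ _ _ _).trans (bord_cl _ _ _)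
    · funext i
      exact (bord_cl _ _ _).trans (ext0_c _ _ _)
  right_inv := by
    rintro ⟨B, hB⟩
    apply Subtype.ext
    funext i j
    refine Fin.lastCases (n := 2 * k + 1) ?_ (fun i => ?_) i <;>
      refine Fin.lastCases (n := 2 * k + 1) ?_ (fun j => ?_) j
    · exact (bord_ll _ _).trans (hB.2 _ _ rfl).symm
    · refine (bord_lc _ _ _).trans ?_
      refine Fin.lastCases ?_ (fun j => ?_) j
      · refine (ext0_l _ _).trans (hB.2 _ _ ?_).symm
        simp; omega
      · exact (ext0_c _ _ _).trans (hB.1 _ _)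
    · refine (bord_cl _ _ _).trans ?_
      refine Fin.lastCases ?_ (fun j => ?_) i
      · refine (ext0_l _ _).trans (hB.2 _ _ ?_).symm
        simp; omega
      · exact (ext0_c _ _ _)
    · refine (bord_cc _ _ _ _).trans ?_
      refine Fin.lastCases ?_ (fun i => ?_) i <;> refine Fin.lastCases ?_ (fun j => ?_) j
      · exact (bord_ll _ _).trans (hB.2 _ _ rfl).symm
      · exact (bord_lc _ _ _).trans (hB.1 _ _)
      · exact (bord_cl _ _ _)
      · exact (bord_cc _ _ _ _)

/-- the recurrence for `N₂(m,h)`, `m ≥ 2`, `1 ≤ h ≤ 2m`. -/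
theorem stmt_12 (m : ℕ) (hm : 2 ≤ m) (h : ℤ) (h1 : 1 ≤ h) (h2 : h ≤ 2 * (m : ℤ)) :
    (N2 m h : ℚ) =
      ((2 : ℚ) ^ (h - 1) + 2 ^ (2 * h - 1)) * N2 (m - 1) h +
      (3 * (2 : ℚ) ^ (2 * (m : ℤ) - 4 + h) - 5 * 2 ^ (2 * h - 5) - 2 ^ (h - 3)) *
        N2 (m - 1) (h - 2) +
      (-3 * (2 : ℚ) ^ (2 * (m : ℤ) - 6 + h) + 2 ^ (4 * (m : ℤ) - 4) + 2 ^ (2 * h - 7)) *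
        N2 (m - 1) (h - 4) := by
  classical
  obtain ⟨k, rfl⟩ : ∃ k, m = k + 1 := ⟨m - 1, by omega⟩
  rw [Nat.add_sub_cancel]
  simp only [N2_eq]
  rw [← (decomp k).sum_comp, Fintype.sum_prod_type]
  simp only [Finset.mul_sum]
  rw [← Finset.sum_add_distrib, ← Finset.sum_add_distrib]
  refine Finset.sum_congr rfl fun A _ => ?_
  rw [Fintype.sum_prod_type]
  refine (sum_uv A.2.alt h).trans ?_
  push_cast
  rw [show 2 * ((k : ℤ) + 1) - 4 = 2 * k - 2 by ring, show 2 * ((k : ℤ) + 1) - 6 = 2 * k - 4 by ring,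
    show 4 * ((k : ℤ) + 1) - 4 = 2 * (2 * k) by ring]
end

section
/- For integers μ ≥ 1 and h, let N₃(μ,h) denote the number of symmetric 3μ×3μ matrices over ZMod 2, with all μ diagonal 3×3 blocks zero, that have rank exactly h (so N₃(μ,h) = 0 if h < 0 or h > 3μ, and N₃(μ,0) = 1). Then for every m ≥ 2 and every 1 ≤ h ≤ 3m, the following identity holds in ℚ: N₃(m,h) = t₁·N₃(m−1,h) + t₂·N₃(m−1,h−2) + t₃·N₃(m−1,h−4) + t₄·N₃(m−1,h−6), where t₁ = 2^{3h−3} + 7·2^{2h−3}; t₂ = (2^{3m−3} − 2^{h−2})·(2^{2h−3} + 2^{h} + 1) + (2^{3m−3} − 2^{h−3})·(2^{2h−4} + 2^{h−1} − 3) + (2^{3m−3} − 2^{h−4})·(2^{2h−5} − 5·2^{h−3} + 2); t₃ = (2^{3m−3} − 2^{h−4})·(7·2^{3m+h−7} − 21·2^{2h−9} − 7·2^{h−5}); and t₄ = ∏_{i=4}^{6} (2^{3m−3} − 2^{h−i}); with 2^k denoting the rational power of 2 (the exponent k ∈ ℤ may be negative). -/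
/-- `N₃(μ,h)`: the number of symmetric `3μ × 3μ` matrices over `ZMod 2`, with all `μ`
diagonal `3 × 3` blocks zero, of rank exactly `h` (automatically `0` for `h < 0` or
`h > 3μ`). -/
noncomputable def N3 (mu : ℕ) (h : ℤ) : ℕ :=
  Nat.card {B : Matrix (Fin (3 * mu)) (Fin (3 * mu)) (ZMod 2) //
    (∀ i j, B i j = B j i) ∧
    (∀ i j : Fin (3 * mu), (i : ℕ) / 3 = (j : ℕ) / 3 → B i j = 0) ∧
    (B.rank : ℤ) = h}


namespace Aux13
open Matrix Module

abbrev F := ZMod 2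

def addRow {I J : Type*} (A : Matrix I J F) (w : J → F) : Matrix (Option I) J F :=
  fun o => o.elim w A

open Classical in
theorem finrank_span_insert {V : Type*} [AddCommGroup V] [Module F V] [Module.Finite F V]
    (s : Set V) (w : V) :
    finrank F (Submodule.span F (insert w s)) =
      finrank F (Submodule.span F s) + if w ∈ Submodule.span F s then 0 else 1 := by
  split_ifs with hw
  · rw [Submodule.span_insert_eq_span hw, add_zero]
  · rw [Submodule.span_insert, sup_comm, Submodule.finrank_sup_span_singleton hw]

open Classical in
theorem rank_addRow {I J : Type*} [Fintype I] [Fintype J] (A : Matrix I J F) (w : J → F) :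
    (addRow A w).rank = A.rank + if (∃ y : I → F, y ᵥ* A = w) then 0 else 1 := by
  have h1 : Set.range (addRow A w).row = insert w (Set.range A.row) := by
    ext z
    constructor
    · rintro ⟨(_ | i), rfl⟩
      · exact Or.inl rfl
      · exact Or.inr ⟨i, rfl⟩
    · rintro (rfl | ⟨i, rfl⟩)
      · exact ⟨none, rfl⟩
      · exact ⟨some i, rfl⟩
  have h2 : w ∈ Submodule.span F (Set.range A.row) ↔ ∃ y : I → F, y ᵥ* A = w := by
    rw [← range_vecMulLinear]; rfl
  rw [rank_eq_finrank_span_row, rank_eq_finrank_span_row, h1, finrank_span_insert]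
  simp only [h2]

def bord {I : Type*} (A : Matrix I I F) (v : I → F) : Matrix (Option I) (Option I) F :=
  addRow (addRow Aᵀ v)ᵀ (fun o => o.elim 0 v)

open Classical in
theorem rank_bord {I : Type*} [Fintype I] (A : Matrix I I F) (hs : Aᵀ = A)
    (ha : ∀ y : I → F, y ⬝ᵥ (A *ᵥ y) = 0) (v : I → F) :
    (bord A v).rank = A.rank + if (∃ y, A *ᵥ y = v) then 0 else 2 := by
  have h1 : (∃ y : I → F, y ᵥ* (addRow Aᵀ v)ᵀ = (fun o : Option I => o.elim 0 v)) ↔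
      ∃ y, A *ᵥ y = v := by
    apply exists_congr
    intro y
    rw [Matrix.vecMul_transpose]
    constructor
    · intro h
      ext i
      have := congrFun h (some i)
      rw [hs] at this
      exact this
    · intro h
      ext o
      cases o with
      | none =>
        change v ⬝ᵥ y = 0
        rw [← h, dotProduct_comm]; exact ha y
      | some i =>
        have := congrFun h i
        rw [hs]
        exact this
  have h2 : (∃ y : I → F, y ᵥ* Aᵀ = v) ↔ ∃ y, A *ᵥ y = v := by
    simp [Matrix.vecMul_transpose]
  rw [bord, rank_addRow, rank_transpose, rank_addRow, rank_transpose]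
  simp only [h1, h2]
  split_ifs <;> rfl

theorem alt_of {I : Type*} [Fintype I] (A : Matrix I I F) (hs : Aᵀ = A)
    (hd : ∀ i, A i i = 0) (y : I → F) : y ⬝ᵥ (A *ᵥ y) = 0 := by
  classical
  have : y ⬝ᵥ (A *ᵥ y) = ∑ p : I × I, y p.1 * (A p.1 p.2 * y p.2) := by
    simp [dotProduct, mulVec, Finset.mul_sum, Fintype.sum_prod_type]
  rw [this]
  refine Finset.sum_involution (fun p _ => p.swap) ?_ ?_ ?_ ?_
  · rintro ⟨i, j⟩ -
    have : A j i = A i j := congrFun (congrFun hs i) j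
    simp only [Prod.swap, this]
    have h2 : y j * (A i j * y i) = y i * (A i j * y j) := by ring
    rw [h2]
    exact CharTwo.add_self_eq_zero _
  · rintro ⟨i, j⟩ - h e
    simp only [Prod.swap, Prod.mk.injEq] at e
    apply h
    simp [e.1, hd]
  · simp
  · simp

/-- bordered matrix -/
def M {α : Type*} {k : ℕ} (B : Matrix α α F) (X : Fin k → α → F) :
    Matrix (α ⊕ Fin k) (α ⊕ Fin k) F :=
  fromBlocks B (of X)ᵀ (of X) 0

theorem M_symm {α : Type*} {k : ℕ} (B : Matrix α α F) (hs : Bᵀ = B) (X : Fin k → α → F) :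
    (M B X)ᵀ = M B X := by
  simp [M, fromBlocks_transpose, hs]

theorem M_diag {α : Type*} {k : ℕ} (B : Matrix α α F) (hd : ∀ i, B i i = 0)
    (X : Fin k → α → F) (i) : M B X i i = 0 := by
  cases i <;> simp [M, hd]

def eqv (α : Type*) (k : ℕ) : α ⊕ Fin (k + 1) ≃ Option (α ⊕ Fin k) where
  toFun := Sum.elim (fun a => some (Sum.inl a)) (Fin.cons none (fun j => some (Sum.inr j)))
  invFun := fun o => o.elim (Sum.inr 0) (Sum.elim Sum.inl (fun j => Sum.inr j.succ))
  left_inv := by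
    rintro (a | j)
    · rfl
    · refine Fin.cases ?_ (fun j => ?_) j <;> simp
  right_inv := by
    rintro (_ | a | j) <;> simp

theorem M_cons {α : Type*} {k : ℕ} (B : Matrix α α F) (X : Fin k → α → F) (x : α → F) :
    M B (Fin.cons x X : Fin (k + 1) → α → F) =
      (bord (M B X) (Sum.elim x 0)).submatrix (eqv α k) (eqv α k) := by
  ext i j
  rcases i with i | i <;> rcases j with j | j
  · simp [M, bord, eqv, addRow]; rfl
  · refine Fin.cases ?_ (fun j => ?_) j <;> simp [M, bord, eqv, addRow] <;> rfl
  · refine Fin.cases ?_ (fun j => ?_) i <;> simp [M, bord, eqv, addRow] <;> rfl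
  · refine Fin.cases ?_ (fun j => ?_) j <;> refine Fin.cases ?_ (fun j => ?_) i <;>
      simp [M, bord, eqv, addRow] <;> rfl

open Classical in
theorem rank_M_cons {α : Type*} [Fintype α] {k : ℕ} (B : Matrix α α F) (hs : Bᵀ = B)
    (hd : ∀ i, B i i = 0) (X : Fin k → α → F) (x : α → F) :
    (M B (Fin.cons x X : Fin (k + 1) → α → F)).rank =
      (M B X).rank + if (∃ y, M B X *ᵥ y = Sum.elim x 0) then 0 else 2 := by
  rw [M_cons, rank_submatrix, rank_bord _ (M_symm B hs X)
    (alt_of _ (M_symm B hs X) (M_diag B hd X))]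
  congr

/-- span of the columns -/
noncomputable def C {α : Type*} {k : ℕ} (X : Fin k → α → F) : Submodule F (α → F) :=
  Submodule.span F (Set.range X)

/-- injection as linear map -/
def inj (α : Type*) (k : ℕ) : (α → F) →ₗ[F] (α ⊕ Fin k → F) where
  toFun x := Sum.elim x 0
  map_add' x y := by ext (i | i) <;> simp
  map_smul' c x := by ext (i | i) <;> simp

def prj (α : Type*) (k : ℕ) : (α ⊕ Fin k → F) →ₗ[F] (Fin k → F) where
  toFun x := fun j => x (Sum.inr j)
  map_add' x y := rfl
  map_smul' c x := rfl

noncomputable def S {α : Type*} [Fintype α] {k : ℕ} (B : Matrix α α F) (X : Fin k → α → F) :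
    Submodule F (α → F) :=
  (LinearMap.range (M B X).mulVecLin).comap (inj α k)

theorem mem_S {α : Type*} [Fintype α] {k : ℕ} (B : Matrix α α F) (X : Fin k → α → F) (x) :
    x ∈ S B X ↔ ∃ y, M B X *ᵥ y = Sum.elim x 0 := by
  simp [S, inj]

theorem C_le_S {α : Type*} [Fintype α] {k : ℕ} (B : Matrix α α F) (X : Fin k → α → F) :
    C X ≤ S B X := by
  classical
  rw [C, Submodule.span_le]
  rintro _ ⟨j, rfl⟩
  rw [SetLike.mem_coe, mem_S]
  refine ⟨Pi.single (Sum.inr j) 1, ?_⟩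
  ext (i | i) <;> simp [M]

theorem finrank_S {α : Type*} [Fintype α] {k : ℕ} (B : Matrix α α F) (X : Fin k → α → F) :
    finrank F (C X) + finrank F (S B X) = (M B X).rank := by
  set W := LinearMap.range (M B X).mulVecLin with hW
  have h0 := ((prj α k).domRestrict W).finrank_range_add_finrank_ker
  have h1 : finrank F (LinearMap.range ((prj α k).domRestrict W)) = finrank F (C X) := by
    have e : LinearMap.range ((prj α k).domRestrict W) = LinearMap.range (of X).mulVecLin := by
      rw [LinearMap.range_domRestrict, hW, ← LinearMap.range_comp]
      apply le_antisymm
      · rintro _ ⟨y, rfl⟩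
        refine ⟨fun i => y (Sum.inl i), ?_⟩
        ext j
        simp [prj, M, fromBlocks_mulVec]
        rfl
      · rintro _ ⟨y, rfl⟩
        refine ⟨Sum.elim y 0, ?_⟩
        ext j
        simp [prj, M, fromBlocks_mulVec]
    rw [e, C]
    change (of X).rank = _
    rw [rank_eq_finrank_span_row]
    rfl
  have h2 : finrank F (LinearMap.ker ((prj α k).domRestrict W)) = finrank F (S B X) := by
    refine (LinearEquiv.finrank_eq ?_).symm
    refine LinearEquiv.ofBijective
      (((inj α k).restrict (p := S B X) (q := W) (fun x hx => hx)).codRestrict _ ?_) ⟨?_, ?_⟩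
    · intro x
      ext j
      simp [prj, inj]
    · rintro ⟨x, hx⟩ ⟨y, hy⟩ h
      have h' : inj α k x = inj α k y := congrArg (fun z => ((z.1 : W) : α ⊕ Fin k → F)) h
      ext i
      exact congrFun h' (Sum.inl i)
    · rintro ⟨⟨z, hz⟩, hk⟩
      have hz' : inj α k (fun i => z (Sum.inl i)) = z := by
        ext (i | j)
        · rfl
        · exact (congrFun (show (prj α k) z = 0 from hk) j).symm
      refine ⟨⟨fun i => z (Sum.inl i), ?_⟩, ?_⟩
      · change inj α k _ ∈ W
        rw [hz']; exact hz
      · apply Subtype.ext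
        apply Subtype.ext
        exact hz'
  rw [h1, h2] at h0
  exact h0

/-- one step of the chain -/
noncomputable def step (N : ℚ) (f : ℕ → ℕ → ℚ) (r s : ℕ) : ℚ :=
  2 ^ s * f r s + (2 ^ r / 2 ^ s - 2 ^ s) * f r (s + 1) + (N - 2 ^ r / 2 ^ s) * f (r + 2) (s + 1)

theorem card_sub {V : Type*} [AddCommGroup V] [Module F V] [Fintype V] (p : Submodule F V)
    [DecidablePred (· ∈ p)] :
    ((Finset.univ.filter (fun x => x ∈ p)).card : ℚ) = 2 ^ finrank F p := by
  have h := Module.card_eq_pow_finrank (K := F) (V := p)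
  rw [ZMod.card] at h
  rw [← Fintype.card_subtype]
  exact_mod_cast h

theorem sum_step {α : Type*} [Fintype α] [DecidableEq α] {k : ℕ} (B : Matrix α α F) (hs : Bᵀ = B)
    (hd : ∀ i, B i i = 0) (X : Fin k → α → F) (f : ℕ → ℕ → ℚ) :
    ∑ x : α → F, f (M B (Fin.cons x X : Fin (k + 1) → α → F)).rank
      (finrank F (C (Fin.cons x X : Fin (k + 1) → α → F))) =
    step (2 ^ Fintype.card α) f (M B X).rank (finrank F (C X)) := by
  classical
  have hS : ((2 : ℚ) ^ finrank F (S B X)) = 2 ^ (M B X).rank / 2 ^ finrank F (C X) := by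
    rw [← finrank_S B X, pow_add]; field_simp
  set r := (M B X).rank with hr
  set s := finrank F (C X) with hs'
  have key : ∀ x : α → F, f (M B (Fin.cons x X : Fin (k + 1) → α → F)).rank
      (finrank F (C (Fin.cons x X : Fin (k + 1) → α → F))) =
      (if x ∈ C X then f r s - f r (s + 1) else 0) +
      (if x ∈ S B X then f r (s + 1) - f (r + 2) (s + 1) else 0) + f (r + 2) (s + 1) := by
    intro x
    rw [rank_M_cons B hs hd, C, Fin.range_cons, finrank_span_insert]
    change f (r + _) (s + if x ∈ C X then 0 else 1) = _
    simp only [← mem_S]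
    by_cases h1 : x ∈ C X
    · have h2 := C_le_S B X h1
      simp [h1, h2]
    · by_cases h2 : x ∈ S B X <;> simp [h1, h2]
  rw [Finset.sum_congr rfl (fun x _ => key x), Finset.sum_add_distrib, Finset.sum_add_distrib,
    ← Finset.sum_filter, ← Finset.sum_filter, Finset.sum_const, Finset.sum_const, Finset.sum_const,
    nsmul_eq_mul, nsmul_eq_mul, nsmul_eq_mul, card_sub, card_sub, hS, ← hs', Finset.card_univ,
    Fintype.card_fun, ZMod.card, step]
  push_cast
  ring

theorem sum_cons {α : Type*} [Fintype α] [DecidableEq α] {k : ℕ}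
    (g : (Fin (k + 1) → α → F) → ℚ) :
    ∑ X, g X = ∑ X : Fin k → α → F, ∑ x : α → F, g (Fin.cons x X) := by
  rw [← (Fin.consEquiv (fun _ => α → F)).sum_comp, Fintype.sum_prod_type, Finset.sum_comm]
  rfl

theorem sum_three {α : Type*} [Fintype α] [DecidableEq α] (B : Matrix α α F) (hs : Bᵀ = B)
    (hd : ∀ i, B i i = 0) (f : ℕ → ℕ → ℚ) :
    ∑ X : Fin 3 → α → F, f (M B X).rank (finrank F (C X)) =
    step (2 ^ Fintype.card α) (step (2 ^ Fintype.card α) (step (2 ^ Fintype.card α) f))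
      B.rank 0 := by
  rw [sum_cons]
  simp only [sum_step B hs hd]
  rw [sum_cons]
  simp only [sum_step B hs hd]
  rw [sum_cons]
  simp only [sum_step B hs hd]
  rw [Fintype.sum_unique]
  congr 1
  · have : ∀ X : Fin 0 → α → F, M B X = B.submatrix (Equiv.sumEmpty α (Fin 0))
        (Equiv.sumEmpty α (Fin 0)) := by
      intro X
      ext (i | i) (j | j)
      · simp [M]
      · exact j.elim0
      · exact i.elim0
      · exact i.elim0
    rw [this, rank_submatrix]
  · rw [C, Set.range_eq_empty, Submodule.span_empty, finrank_bot]

def P (n : ℕ) (B : Matrix (Fin (3 * n)) (Fin (3 * n)) F) : Prop :=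
  (∀ i j, B i j = B j i) ∧ (∀ i j : Fin (3 * n), (i : ℕ) / 3 = (j : ℕ) / 3 → B i j = 0)

open Classical in
theorem N3_eq (n : ℕ) (h : ℤ) :
    (N3 n h : ℚ) = ∑ B : {B // P n B}, if (B.1.rank : ℤ) = h then 1 else 0 := by
  rw [Finset.sum_boole, ← Fintype.card_subtype, ← Nat.card_eq_fintype_card, N3]
  congr 1
  refine Nat.card_congr ⟨fun B => ⟨⟨B.1, B.2.1, B.2.2.1⟩, B.2.2.2⟩,
    fun B => ⟨B.1.1, B.1.2.1, B.1.2.2, B.2⟩, fun _ => rfl, fun _ => rfl⟩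

def e3 (n : ℕ) : Fin (3 * n) ⊕ Fin 3 ≃ Fin (3 * (n + 1)) := finSumFinEquiv

theorem e3_inl (n : ℕ) (i : Fin (3 * n)) : ((e3 n (Sum.inl i) : Fin (3 * (n + 1))) : ℕ) = i := rfl

theorem e3_inr (n : ℕ) (i : Fin 3) :
    ((e3 n (Sum.inr i) : Fin (3 * (n + 1))) : ℕ) = 3 * n + i := rfl

theorem P_M (n : ℕ) (B : Matrix (Fin (3 * n)) (Fin (3 * n)) F) (hB : P n B)
    (X : Fin 3 → Fin (3 * n) → F) : P (n + 1) ((M B X).submatrix (e3 n).symm (e3 n).symm) := by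
  constructor
  · intro i j
    have h := M_symm B (by ext i j; exact hB.1 j i) X
    exact congrFun (congrFun h ((e3 n).symm j)) ((e3 n).symm i)
  · intro i j hij
    obtain ⟨i, rfl⟩ := (e3 n).surjective i
    obtain ⟨j, rfl⟩ := (e3 n).surjective j
    simp only [submatrix_apply, Equiv.symm_apply_apply]
    rcases i with i | i <;> rcases j with j | j
    · simp only [e3_inl] at hij
      exact hB.2 i j hij
    · simp only [e3_inl, e3_inr] at hij
      omega
    · simp only [e3_inl, e3_inr] at hij
      omega
    · rfl

def E (n : ℕ) : {B // P n B} × (Fin 3 → Fin (3 * n) → F) ≃ {B // P (n + 1) B} where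
  toFun p := ⟨(M p.1.1 p.2).submatrix (e3 n).symm (e3 n).symm, P_M n p.1.1 p.1.2 p.2⟩
  invFun B := (⟨B.1.submatrix (fun i => e3 n (Sum.inl i)) (fun i => e3 n (Sum.inl i)),
    fun i j => B.2.1 _ _, fun i j hij => B.2.2 _ _ (by rw [e3_inl, e3_inl]; exact hij)⟩,
    fun j i => B.1 (e3 n (Sum.inr j)) (e3 n (Sum.inl i)))
  left_inv := by
    rintro ⟨⟨B, hB⟩, X⟩
    ext i j
    · simp [M]
    · simp [M]
  right_inv := by
    rintro ⟨B, hB⟩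
    apply Subtype.ext
    ext i j
    obtain ⟨i, rfl⟩ := (e3 n).surjective i
    obtain ⟨j, rfl⟩ := (e3 n).surjective j
    simp only [submatrix_apply, Equiv.symm_apply_apply]
    rcases i with i | i <;> rcases j with j | j
    · rfl
    · exact hB.1 _ _
    · rfl
    · refine (hB.2 _ _ ?_).symm
      simp only [e3_inr]
      omega

theorem N3_succ (n : ℕ) (h : ℤ) [DecidablePred (P n)] :
    (N3 (n + 1) h : ℚ) = ∑ B : {B // P n B},
      step (2 ^ (3 * n)) (step (2 ^ (3 * n)) (step (2 ^ (3 * n))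
        (fun r _ => if (r : ℤ) = h then 1 else 0))) B.1.rank 0 := by
  classical
  rw [N3_eq, ← (E n).sum_comp, Fintype.sum_prod_type]
  refine Finset.sum_congr (by ext; simp) (fun B _ => ?_)
  have hh := sum_three B.1 (by ext i j; exact B.2.1 j i) (fun i => B.2.2 i i rfl)
    (fun r _ => if (r : ℤ) = h then 1 else 0)
  rw [Fintype.card_fin] at hh
  rw [← hh]
  refine Finset.sum_congr rfl (fun X _ => ?_)
  have : ((E n) (B, X)).1.rank = (M B.1 X).rank := rank_submatrix _ _ _
  rw [this]

theorem pointwise (n r : ℕ) (h : ℤ) :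
    step (2 ^ (3 * n)) (step (2 ^ (3 * n)) (step (2 ^ (3 * n))
        (fun r _ => if (r : ℤ) = h then 1 else 0))) r 0 =
      ((2 : ℚ) ^ (3 * h - 3) + 7 * 2 ^ (2 * h - 3)) * (if (r : ℤ) = h then 1 else 0) +
      (((2 : ℚ) ^ (3 * ((n + 1 : ℕ) : ℤ) - 3) - 2 ^ (h - 2)) * (2 ^ (2 * h - 3) + 2 ^ h + 1) +
        ((2 : ℚ) ^ (3 * ((n + 1 : ℕ) : ℤ) - 3) - 2 ^ (h - 3)) * (2 ^ (2 * h - 4) + 2 ^ (h - 1) - 3) +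
        ((2 : ℚ) ^ (3 * ((n + 1 : ℕ) : ℤ) - 3) - 2 ^ (h - 4)) *
          (2 ^ (2 * h - 5) - 5 * 2 ^ (h - 3) + 2)) *
        (if (r : ℤ) = h - 2 then 1 else 0) +
      (((2 : ℚ) ^ (3 * ((n + 1 : ℕ) : ℤ) - 3) - 2 ^ (h - 4)) *
        (7 * (2 : ℚ) ^ (3 * ((n + 1 : ℕ) : ℤ) + h - 7) - 21 * 2 ^ (2 * h - 9) - 7 * 2 ^ (h - 5))) *
        (if (r : ℤ) = h - 4 then 1 else 0) +
      (∏ i ∈ Finset.Icc (4 : ℤ) 6, ((2 : ℚ) ^ (3 * ((n + 1 : ℕ) : ℤ) - 3) - 2 ^ (h - i))) *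
        (if (r : ℤ) = h - 6 then 1 else 0) := by
  have hI : Finset.Icc (4 : ℤ) 6 = {4, 5, 6} := by decide
  have hN : (2 : ℚ) ^ (3 * ((n + 1 : ℕ) : ℤ) - 3) = 2 ^ (3 * n) := by
    rw [← zpow_natCast]; congr 1; push_cast; ring
  have hNh : (2 : ℚ) ^ (3 * ((n + 1 : ℕ) : ℤ) + h - 7) = 2 ^ (3 * n) * 2 ^ (h - 4) := by
    rw [← zpow_natCast, ← zpow_add₀ two_ne_zero]; congr 1; push_cast; ring
  have hp : ∏ i ∈ Finset.Icc (4 : ℤ) 6, ((2 : ℚ) ^ (3 * ((n + 1 : ℕ) : ℤ) - 3) - 2 ^ (h - i)) =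
      (2 ^ (3 * n) - 2 ^ (h - 4)) * ((2 ^ (3 * n) - 2 ^ (h - 5)) * (2 ^ (3 * n) - 2 ^ (h - 6))) := by
    rw [hI, hN]; simp
  have a2 : ((r + 2 : ℕ) : ℤ) = h ↔ (r : ℤ) = h - 2 := by push_cast; omega
  have a4 : ((r + 2 + 2 : ℕ) : ℤ) = h ↔ (r : ℤ) = h - 4 := by push_cast; omega
  have a6 : ((r + 2 + 2 + 2 : ℕ) : ℤ) = h ↔ (r : ℤ) = h - 6 := by push_cast; omega
  rw [hp, hNh, hN]
  simp only [step, a2, a4, a6]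
  generalize (2 : ℚ) ^ (3 * n) = N
  have z2 : ∀ k : ℤ, (2 : ℚ) ^ (2 * h - k) = 2 ^ h * 2 ^ h / 2 ^ k := by
    intro k; rw [zpow_sub₀ two_ne_zero, two_mul, zpow_add₀ two_ne_zero]
  have z3 : ∀ k : ℤ, (2 : ℚ) ^ (3 * h - k) = 2 ^ h * 2 ^ h * 2 ^ h / 2 ^ k := by
    intro k
    rw [zpow_sub₀ two_ne_zero, show 3 * h = h + h + h by ring, zpow_add₀ two_ne_zero,
      zpow_add₀ two_ne_zero]
  have z1 : ∀ k : ℤ, (2 : ℚ) ^ (h - k) = 2 ^ h / 2 ^ k := by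
    intro k; rw [zpow_sub₀ two_ne_zero]
  rw [z3]
  simp only [z2, z1]
  have q : ∀ c : ℕ, (r : ℤ) = h - c → (2 : ℚ) ^ h = 2 ^ r * 2 ^ c := by
    intro c hc
    rw [show h = ((r + c : ℕ) : ℤ) by push_cast; omega, zpow_natCast, pow_add]
  by_cases c0 : (r : ℤ) = h
  · have := q 0 (by simpa using c0)
    rw [this, if_pos c0, if_neg (by omega), if_neg (by omega), if_neg (by omega)]
    norm_num
    ring
  by_cases c2 : (r : ℤ) = h - 2
  · have := q 2 (by simpa using c2)
    rw [this, if_neg c0, if_pos c2, if_neg (by omega), if_neg (by omega)]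
    norm_num
    ring
  by_cases c4 : (r : ℤ) = h - 4
  · have := q 4 (by simpa using c4)
    rw [this, if_neg c0, if_neg c2, if_pos c4, if_neg (by omega)]
    norm_num
    ring
  by_cases c6 : (r : ℤ) = h - 6
  · have := q 6 (by simpa using c6)
    rw [this, if_neg c0, if_neg c2, if_neg c4, if_pos c6]
    norm_num
    ring
  simp [c0, c2, c4, c6]

end Aux13

/-- the recurrence for `N₃(m,h)`, `m ≥ 2`, `1 ≤ h ≤ 3m`. -/
theorem stmt_13 (m : ℕ) (hm : 2 ≤ m) (h : ℤ) (h1 : 1 ≤ h) (h2 : h ≤ 3 * (m : ℤ)) :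
    (N3 m h : ℚ) =
      ((2 : ℚ) ^ (3 * h - 3) + 7 * 2 ^ (2 * h - 3)) * N3 (m - 1) h +
      (((2 : ℚ) ^ (3 * (m : ℤ) - 3) - 2 ^ (h - 2)) * (2 ^ (2 * h - 3) + 2 ^ h + 1) +
        ((2 : ℚ) ^ (3 * (m : ℤ) - 3) - 2 ^ (h - 3)) * (2 ^ (2 * h - 4) + 2 ^ (h - 1) - 3) +
        ((2 : ℚ) ^ (3 * (m : ℤ) - 3) - 2 ^ (h - 4)) * (2 ^ (2 * h - 5) - 5 * 2 ^ (h - 3) + 2)) *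
        N3 (m - 1) (h - 2) +
      (((2 : ℚ) ^ (3 * (m : ℤ) - 3) - 2 ^ (h - 4)) *
        (7 * (2 : ℚ) ^ (3 * (m : ℤ) + h - 7) - 21 * 2 ^ (2 * h - 9) - 7 * 2 ^ (h - 5))) *
        N3 (m - 1) (h - 4) +
      (∏ i ∈ Finset.Icc (4 : ℤ) 6, ((2 : ℚ) ^ (3 * (m : ℤ) - 3) - 2 ^ (h - i))) *
        N3 (m - 1) (h - 6) := by
  classical
  obtain ⟨n, rfl⟩ : ∃ n, m = n + 1 := ⟨m - 1, by omega⟩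
  rw [show n + 1 - 1 = n from rfl, Aux13.N3_succ, Aux13.N3_eq n h, Aux13.N3_eq n (h - 2),
    Aux13.N3_eq n (h - 4), Aux13.N3_eq n (h - 6), Finset.mul_sum, Finset.mul_sum, Finset.mul_sum,
    Finset.mul_sum, ← Finset.sum_add_distrib, ← Finset.sum_add_distrib, ← Finset.sum_add_distrib]
  exact Finset.sum_congr rfl (fun B _ => Aux13.pointwise n B.1.rank h)
end
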